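/- arXiv:1211.3945 — 7 statements merged into one kernel-verified Lean document; each statement's English description precedes it below -/
import Mathlib

section
/- Scott's formula: Let n ≥ 1, r ≥ 1 and let T = (T_1, …, T_{r+1}) ∈ GL_n(ℂ)^{r+1} be an irreducible M-tuple such that at least one T_i is not the identity matrix. Then ∑_{i=1}^{r+1} rank(T_i − I_n) ≥ 2n. -/
open Matrix

/-- **Scott's formula.** For an irreducible M-tuple `T = (T_1, …, T_{r+1})` in `GL_n(ℂ)`
(i.e. invertible matrices with product the identity, admitting no nontrivial common
invariant subspace) in which at least one member is not the identity, one has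
`∑ rank (T_i − 1) ≥ 2n`. -/
theorem scott_formula (n r : ℕ) (hn : 1 ≤ n) (hr : 1 ≤ r)
    (T : Fin (r + 1) → Matrix (Fin n) (Fin n) ℂ)
    (hUnit : ∀ i, IsUnit (T i))
    (hprod : (List.ofFn T).prod = 1)
    (hIrr : ∀ W : Submodule ℂ (Fin n → ℂ),
      (∀ i, ∀ v ∈ W, (T i).mulVec v ∈ W) → W = ⊥ ∨ W = ⊤)
    (hne : ∃ i, T i ≠ 1) :
    2 * n ≤ ∑ i : Fin (r + 1), (T i - 1).rank := by
  obtain ⟨Q, hQ0, hQl, hQ⟩ : ∃ Q : ℕ → Matrix (Fin n) (Fin n) ℂ, Q 0 = 1 ∧ Q (r + 1) = 1 ∧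
      ∀ i : Fin (r + 1), T i * Q (i + 1) = Q i := by
    refine ⟨fun k => ((List.ofFn T).drop k).prod, by simpa using hprod, ?_, ?_⟩
    · simp [List.drop_of_length_le]
    · intro i
      have h : (i : ℕ) < (List.ofFn T).length := by rw [List.length_ofFn]; exact i.2
      show _ = ((List.ofFn T).drop i).prod
      rw [List.drop_eq_getElem_cons h, List.prod_cons, List.getElem_ofFn]
  let A : Fin (r + 1) → ((Fin n → ℂ) →ₗ[ℂ] (Fin n → ℂ)) := fun i => (T i - 1).mulVecLin
  have hA : ∀ i v, A i v = (T i).mulVec v - v := by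
    intro i v; simp [A]
  have hAQ : ∀ (i : Fin (r + 1)) v, A i ((Q (i + 1)).mulVec v)
      = (Q i).mulVec v - (Q (i + 1)).mulVec v := by
    intro i v; rw [hA, Matrix.mulVec_mulVec, hQ]
  let β : (Fin n → ℂ) →ₗ[ℂ] (∀ i, LinearMap.range (A i)) :=
    LinearMap.pi fun i => (A i).rangeRestrict ∘ₗ (Q (i + 1)).mulVecLin
  let δ : (∀ i, LinearMap.range (A i)) →ₗ[ℂ] (Fin n → ℂ) :=
    ∑ i, (LinearMap.range (A i)).subtype ∘ₗ LinearMap.proj i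
  have hβ : ∀ v i, (β v i : Fin n → ℂ) = A i ((Q (i + 1)).mulVec v) := fun v i => rfl
  have hδ : ∀ u, δ u = ∑ i, (u i : Fin n → ℂ) := by
    intro u; simp [δ, LinearMap.sum_apply]
  have hT1 : ∀ i, (∀ v, (T i).mulVec v = v) → T i = 1 := by
    intro i h
    apply Matrix.ext_of_mulVec_single
    intro j; rw [h, Matrix.one_mulVec]
  have hinj : LinearMap.ker β = ⊥ := by
    have hfix : ∀ v ∈ LinearMap.ker β, ∀ i, (T i).mulVec v = v := by
      intro v hv
      have h1 : ∀ i : Fin (r + 1), (Q i).mulVec v = (Q (i + 1)).mulVec v := by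
        intro i
        have := hβ v i
        rw [LinearMap.mem_ker.1 hv, hAQ] at this
        exact sub_eq_zero.1 (by simpa using this.symm)
      have h2 : ∀ k, k ≤ r + 1 → (Q k).mulVec v = v := by
        intro k
        induction k with
        | zero => intro _; simp [hQ0]
        | succ k ih =>
          intro hk
          rw [← h1 ⟨k, by omega⟩]
          exact ih (by omega)
      intro i
      have := congrArg (fun M => M.mulVec v) (hQ i)
      simp only [← Matrix.mulVec_mulVec] at this
      rwa [h2 _ (by omega), h2 _ (by omega)] at this
    rcases hIrr (LinearMap.ker β) (fun i v hv => by rwa [hfix v hv i]) with h | h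
    · exact h
    · obtain ⟨i, hi⟩ := hne
      exact absurd (hT1 i fun v => hfix v (h ▸ Submodule.mem_top) i) hi
  have hAmem : ∀ i v, A i v ∈ LinearMap.range δ := by
    intro i v
    refine ⟨Pi.single i ⟨A i v, LinearMap.mem_range_self _ _⟩, ?_⟩
    rw [hδ, Finset.sum_eq_single i]
    · simp
    · intro j _ hj; simp [Pi.single_eq_of_ne hj]
    · simp
  have hsurj : LinearMap.range δ = ⊤ := by
    rcases hIrr (LinearMap.range δ) (fun i v hv => by
      have := Submodule.add_mem _ (hAmem i v) hv
      rwa [hA, sub_add_cancel] at this) with h | h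
    · obtain ⟨i, hi⟩ := hne
      refine absurd (hT1 i fun v => ?_) hi
      have := hAmem i v
      rw [h, Submodule.mem_bot, hA] at this
      exact sub_eq_zero.1 this
    · exact h
  have hcomp : LinearMap.range β ≤ LinearMap.ker δ := by
    rintro _ ⟨v, rfl⟩
    rw [LinearMap.mem_ker, hδ]
    simp only [hβ, hAQ]
    rw [Fin.sum_univ_eq_sum_range (fun k => (Q k).mulVec v - (Q (k + 1)).mulVec v),
      Finset.sum_range_sub', hQ0, hQl, sub_self]
  have e1 := LinearMap.finrank_range_add_finrank_ker δ
  have e2 := LinearMap.finrank_range_add_finrank_ker β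
  have e3 := Submodule.finrank_mono hcomp
  have e4 : Module.finrank ℂ (∀ i, LinearMap.range (A i)) = ∑ i, (T i - 1).rank := by
    rw [Module.finrank_pi_fintype]; rfl
  rw [hsurj, finrank_top, e4] at e1
  rw [hinj, finrank_bot] at e2
  simp only [Module.finrank_fin_fun] at e1 e2
  omega
end

section
/- Let ε ∈ {1, −1}, let α ∈ ℂ× with α² ≠ 1, and let A ∈ Sp₄(ℂ) satisfy (A − εαI)(A − εα⁻¹I)(A − εI) = 0 and rank(A − εI) = 2 (so A is semisimple with eigenvalues εα, εα⁻¹, ε, ε; Jordan form ±([α] ⊕ J(1)²)). Then dim_ℂ c(A) = 4, equivalently δ(A) = 6. -/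
open Matrix

noncomputable section

/-- The standard symplectic form matrix `Ω = [[0, I₂], [−I₂, 0]]` on `ℂ⁴`. -/
def Omega : Matrix (Fin 4) (Fin 4) ℂ :=
  !![0, 0, 1, 0; 0, 0, 0, 1; -1, 0, 0, 0; 0, -1, 0, 0]

/-- The centralizer `c(A) = {X ∈ 𝔰𝔭₄(ℂ) : A X = X A}` of `A` inside the Lie algebra
`𝔰𝔭₄(ℂ) = {X : Xᵀ Ω + Ω X = 0}`, as a complex subspace of the `4×4` matrices. -/
def sp4cent (A : Matrix (Fin 4) (Fin 4) ℂ) : Submodule ℂ (Matrix (Fin 4) (Fin 4) ℂ) where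
  carrier := {X | Xᵀ * Omega + Omega * X = 0 ∧ A * X = X * A}
  add_mem' := by
    rintro X Y ⟨hX1, hX2⟩ ⟨hY1, hY2⟩
    refine ⟨?_, ?_⟩
    · have h : (X + Y)ᵀ * Omega + Omega * (X + Y)
          = (Xᵀ * Omega + Omega * X) + (Yᵀ * Omega + Omega * Y) := by
        rw [Matrix.transpose_add, Matrix.add_mul, Matrix.mul_add]
        abel
      rw [h, hX1, hY1, add_zero]
    · rw [Matrix.mul_add, Matrix.add_mul, hX2, hY2]
  zero_mem' := by
    refine ⟨?_, ?_⟩ <;> simp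
  smul_mem' := by
    rintro c X ⟨hX1, hX2⟩
    refine ⟨?_, ?_⟩
    · have h : (c • X)ᵀ * Omega + Omega * (c • X) = c • (Xᵀ * Omega + Omega * X) := by
        rw [Matrix.transpose_smul, Matrix.smul_mul, Matrix.mul_smul, smul_add]
      rw [h, hX1, smul_zero]
    · rw [Matrix.mul_smul, Matrix.smul_mul, hX2]


theorem om_anti (x y : Fin 4 → ℂ) : x ⬝ᵥ (Omega *ᵥ y) = -(y ⬝ᵥ (Omega *ᵥ x)) := by
  simp [Omega, dotProduct, mulVec, Fin.sum_univ_four]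
  ring

theorem om_self (x : Fin 4 → ℂ) : x ⬝ᵥ (Omega *ᵥ x) = 0 := by
  simp [Omega, dotProduct, mulVec, Fin.sum_univ_four]
  ring

theorem om_nondeg (x : Fin 4 → ℂ) (h : ∀ y, x ⬝ᵥ (Omega *ᵥ y) = 0) : x = 0 := by
  have h0 := h ![1,0,0,0]
  have h1 := h ![0,1,0,0]
  have h2 := h ![0,0,1,0]
  have h3 := h ![0,0,0,1]
  simp [Omega, dotProduct, mulVec, Fin.sum_univ_four] at h0 h1 h2 h3
  ext i
  fin_cases i <;> simp [*]

theorem om_pres {A : Matrix (Fin 4) (Fin 4) ℂ} (hSp : Aᵀ * Omega * A = Omega)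
    (x y : Fin 4 → ℂ) : (A *ᵥ x) ⬝ᵥ (Omega *ᵥ (A *ᵥ y)) = x ⬝ᵥ (Omega *ᵥ y) := by
  conv_rhs => rw [← hSp]
  rw [← mulVec_mulVec, ← mulVec_mulVec, dotProduct_mulVec x, vecMul_transpose]

theorem om_orth {A : Matrix (Fin 4) (Fin 4) ℂ} (hSp : Aᵀ * Omega * A = Omega)
    {x y : Fin 4 → ℂ} {l m : ℂ} (hx : A *ᵥ x = l • x) (hy : A *ᵥ y = m • y)
    (hlm : l * m ≠ 1) : x ⬝ᵥ (Omega *ᵥ y) = 0 := by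
  have h := om_pres hSp x y
  rw [hx, hy, mulVec_smul, smul_dotProduct, dotProduct_smul, smul_eq_mul, smul_eq_mul] at h
  have : (l * m - 1) * (x ⬝ᵥ (Omega *ᵥ y)) = 0 := by linear_combination h
  exact (mul_eq_zero.1 this).resolve_left (sub_ne_zero.2 hlm)

theorem partner {A : Matrix (Fin 4) (Fin 4) ℂ} (hSp : Aᵀ * Omega * A = Omega)
    {x : Fin 4 → ℂ} (hx0 : x ≠ 0) {l m p q : ℂ} (hx : A *ᵥ x = l • x) (hlm : l * m = 1)
    (hp : m ≠ p) (hq : m ≠ q)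
    (h : (A - m • (1 : Matrix (Fin 4) (Fin 4) ℂ)) * (A - p • (1 : Matrix (Fin 4) (Fin 4) ℂ)) *
      (A - q • (1 : Matrix (Fin 4) (Fin 4) ℂ)) = 0) :
    ∃ y, A *ᵥ y = m • y ∧ x ⬝ᵥ (Omega *ᵥ y) = 1 := by
  have hA : ∀ y, x ⬝ᵥ (Omega *ᵥ (A *ᵥ y)) = m * (x ⬝ᵥ (Omega *ᵥ y)) := by
    intro y
    have h := om_pres hSp x y
    rw [hx, smul_dotProduct, smul_eq_mul] at h
    linear_combination m * h - (x ⬝ᵥ (Omega *ᵥ (A *ᵥ y))) * hlm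
  have hs : ∀ (c : ℂ) y, x ⬝ᵥ (Omega *ᵥ ((A - c • (1 : Matrix (Fin 4) (Fin 4) ℂ)) *ᵥ y))
      = (m - c) * (x ⬝ᵥ (Omega *ᵥ y)) := by
    intro c y
    rw [sub_mulVec, mulVec_sub, dotProduct_sub, hA, smul_mulVec, one_mulVec, mulVec_smul,
      dotProduct_smul, smul_eq_mul]
    ring
  obtain ⟨y, hy⟩ : ∃ y, x ⬝ᵥ (Omega *ᵥ y) ≠ 0 := by
    by_contra! hc
    exact hx0 (om_nondeg x hc)
  set z := (A - p • (1 : Matrix (Fin 4) (Fin 4) ℂ)) *ᵥ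
    ((A - q • (1 : Matrix (Fin 4) (Fin 4) ℂ)) *ᵥ y) with hz
  have hz1 : x ⬝ᵥ (Omega *ᵥ z) ≠ 0 := by
    rw [hz, hs, hs]
    exact mul_ne_zero (sub_ne_zero.2 hp) (mul_ne_zero (sub_ne_zero.2 hq) hy)
  have hz2 : A *ᵥ z = m • z := by
    have : (A - m • (1 : Matrix (Fin 4) (Fin 4) ℂ)) *ᵥ z = 0 := by
      rw [hz, mulVec_mulVec, mulVec_mulVec, h, zero_mulVec]
    rw [sub_mulVec, smul_mulVec, one_mulVec] at this
    exact sub_eq_zero.1 this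
  refine ⟨(x ⬝ᵥ (Omega *ᵥ z))⁻¹ • z, ?_, ?_⟩
  · rw [mulVec_smul, hz2, smul_comm]
  · rw [mulVec_smul, dotProduct_smul, smul_eq_mul, inv_mul_cancel₀ hz1]

theorem exists_mulVec_ne {Z : Matrix (Fin 4) (Fin 4) ℂ} (h : Z ≠ 0) : ∃ x, Z *ᵥ x ≠ 0 := by
  by_contra! hc
  apply h
  ext i j
  have := congrFun (hc (Pi.single j 1)) i
  simpa using this

theorem eig_of_mul {A Z : Matrix (Fin 4) (Fin 4) ℂ} {l : ℂ} (hZ : Z ≠ 0)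
    (h : (A - l • (1 : Matrix (Fin 4) (Fin 4) ℂ)) * Z = 0) :
    ∃ x, x ≠ 0 ∧ A *ᵥ x = l • x := by
  obtain ⟨x, hx⟩ := exists_mulVec_ne hZ
  refine ⟨Z *ᵥ x, hx, ?_⟩
  have : (A - l • (1 : Matrix (Fin 4) (Fin 4) ℂ)) *ᵥ (Z *ᵥ x) = 0 := by
    rw [mulVec_mulVec, h, zero_mulVec]
  rw [sub_mulVec, smul_mulVec, one_mulVec] at this
  exact sub_eq_zero.1 this

theorem fac_comm (A : Matrix (Fin 4) (Fin 4) ℂ) (p q : ℂ) :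
    (A - p • (1 : Matrix (Fin 4) (Fin 4) ℂ)) * (A - q • (1 : Matrix (Fin 4) (Fin 4) ℂ)) =
    (A - q • (1 : Matrix (Fin 4) (Fin 4) ℂ)) * (A - p • (1 : Matrix (Fin 4) (Fin 4) ℂ)) := by
  simp only [sub_mul, mul_sub, smul_mul_assoc, mul_smul_comm, one_mul, mul_one, smul_sub]
  rw [smul_comm p q]
  abel

theorem conj_mem {A D P Q : Matrix (Fin 4) (Fin 4) ℂ} (hAP : A * P = P * D)
    (hPQ : P * Q = 1) (hQP : Q * P = 1) (hP : Pᵀ * Omega * P = Omega)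
    {X : Matrix (Fin 4) (Fin 4) ℂ} (hX : X ∈ sp4cent A) : Q * X * P ∈ sp4cent D := by
  obtain ⟨h1, h2⟩ := hX
  have e1 : Pᵀ * Omega = Omega * Q := by
    conv_rhs => rw [← hP]
    rw [mul_assoc _ P Q, hPQ, mul_one]
  have e2 : Qᵀ * Omega = Omega * P := by
    rw [← hP, ← mul_assoc, ← mul_assoc, ← transpose_mul, hPQ, transpose_one, one_mul, hP]
  have e3 : Q * A = D * Q := by
    calc Q * A = Q * (A * P) * Q := by rw [mul_assoc, mul_assoc, hPQ, mul_one]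
      _ = D * Q := by rw [hAP, ← mul_assoc, hQP, one_mul]
  constructor
  · have : (Q * X * P)ᵀ * Omega + Omega * (Q * X * P) = Pᵀ * (Xᵀ * Omega + Omega * X) * P := by
      rw [transpose_mul, transpose_mul, mul_add, add_mul]
      congr 1
      · simp only [mul_assoc, e2]
      · rw [← mul_assoc, ← mul_assoc, ← mul_assoc, e1]
    rw [this, h1, mul_zero, zero_mul]
  · calc D * (Q * X * P) = (D * Q) * X * P := by simp only [mul_assoc]
      _ = Q * (A * X) * P := by rw [← e3]; simp only [mul_assoc]
      _ = Q * X * (A * P) := by rw [h2]; simp only [mul_assoc]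
      _ = Q * X * P * D := by rw [hAP]; simp only [mul_assoc]

def Mat4 (f : Fin 4 → ℂ) : Matrix (Fin 4) (Fin 4) ℂ :=
  !![f 0, 0, 0, 0; 0, f 1, 0, f 2; 0, 0, -f 0, 0; 0, f 3, 0, -f 1]

theorem Mat4_mem (a b c : ℂ) (f : Fin 4 → ℂ) :
    Mat4 f ∈ sp4cent (diagonal ![a, b, c, b]) := by
  constructor
  · ext i j
    fin_cases i <;> fin_cases j <;> simp [Mat4, Omega, Matrix.mul_apply, Fin.sum_univ_four]
  · ext i j
    rw [diagonal_mul, mul_diagonal]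
    fin_cases i <;> fin_cases j <;> simp [Mat4, mul_comm]

theorem Mat4_of_mem {a b c : ℂ} (hab : a ≠ b) (hac : a ≠ c) (hbc : b ≠ c)
    {Y : Matrix (Fin 4) (Fin 4) ℂ} (hY : Y ∈ sp4cent (diagonal ![a, b, c, b])) :
    Mat4 ![Y 0 0, Y 1 1, Y 1 3, Y 3 1] = Y := by
  obtain ⟨h1, h2⟩ := hY
  have hz : ∀ i j, (![a, b, c, b] : Fin 4 → ℂ) i ≠ (![a, b, c, b] : Fin 4 → ℂ) j →
      Y i j = 0 := by
    intro i j hij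
    have := congrFun (congrFun h2 i) j
    rw [diagonal_mul, mul_diagonal] at this
    have h3 : ((![a, b, c, b] : Fin 4 → ℂ) i - (![a, b, c, b] : Fin 4 → ℂ) j) * Y i j = 0 := by
      linear_combination this
    exact (mul_eq_zero.1 h3).resolve_left (sub_ne_zero.2 hij)
  have k02 := congrFun (congrFun h1 0) 2
  have k13 := congrFun (congrFun h1 1) 3
  simp [Omega, Matrix.mul_apply, Fin.sum_univ_four, vecMul, dotProduct] at k02 k13
  have k1 : -Y 0 0 = Y 2 2 := by linear_combination -k02
  have k2 : -Y 1 1 = Y 3 3 := by linear_combination -k13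
  ext i j
  fin_cases i <;> fin_cases j <;> simp [Mat4, k1, k2] <;> symm <;> apply hz <;>
    simp [hab, hac, hbc, hab.symm, hac.symm, hbc.symm]

/-- If `A ∈ Sp₄(ℂ)` is semisimple with eigenvalues `εα, εα⁻¹, ε, ε` where `ε ∈ {1, −1}` and
`α² ≠ 1`, i.e. has Jordan form `±([α] ⊕ J(1)²)` and satisfies
`(A − εαI)(A − εα⁻¹I)(A − εI) = 0` with `rank (A − εI) = 2`, then its centralizer in
`𝔰𝔭₄(ℂ)` has dimension `4`; equivalently `δ(A) = 10 − dim c(A) = 6`. -/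
theorem sp4_delta_jordan_bra_alpha_plus_ones (ε : ℂ) (hε : ε = 1 ∨ ε = -1)
    (α : ℂ) (hα0 : α ≠ 0) (hα1 : α ^ 2 ≠ 1)
    (A : Matrix (Fin 4) (Fin 4) ℂ) (hUnit : IsUnit A)
    (hSp : Aᵀ * Omega * A = Omega)
    (h1 : (A - (ε * α) • (1 : Matrix (Fin 4) (Fin 4) ℂ)) *
          (A - (ε * α⁻¹) • (1 : Matrix (Fin 4) (Fin 4) ℂ)) *
          (A - ε • (1 : Matrix (Fin 4) (Fin 4) ℂ)) = 0)
    (h2 : (A - ε • (1 : Matrix (Fin 4) (Fin 4) ℂ)).rank = 2) :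
    Module.finrank ℂ (sp4cent A) = 4 ∧
      (10 : ℤ) - Module.finrank ℂ (sp4cent A) = 6 := by
  have hεε : ε * ε = 1 := by rcases hε with rfl | rfl <;> norm_num
  have hε0 : ε ≠ 0 := by rintro rfl; simp at hεε
  have hα1' : α ≠ 1 := by rintro rfl; simp at hα1
  have hαi : α * α⁻¹ = 1 := mul_inv_cancel₀ hα0
  have hab : ε * α ≠ ε := fun h => hα1' (by simpa [hε0] using h)
  have hbc : ε ≠ ε * α⁻¹ := fun h => hα1' (by
    have h' : α⁻¹ = 1 := by
      apply mul_left_cancel₀ hε0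
      rw [mul_one]; exact h.symm
    simpa using h')
  have hac : ε * α ≠ ε * α⁻¹ := fun h => hα1 (by
    have h' := mul_left_cancel₀ hε0 h
    rw [pow_two]
    linear_combination α * h' + hαi)
  have hlm : (ε * α) * (ε * α⁻¹) = 1 := by
    linear_combination α * α⁻¹ * hεε + hαi
  set a := ε * α with ha
  set c := ε * α⁻¹ with hc
  have hεa : ε * a ≠ 1 := fun h => hab (by
    linear_combination ε * h - a * hεε)
  have hεc : ε * c ≠ 1 := fun h => hbc (by
    linear_combination (-ε) * h + c * hεε)
  have haa : a * a ≠ 1 := fun h => hac (by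
    linear_combination c * h - a * hlm)
  have hcc : c * c ≠ 1 := fun h => hac (by
    linear_combination -a * h + c * hlm)
  have hN0 : A - ε • (1 : Matrix (Fin 4) (Fin 4) ℂ) ≠ 0 := by
    intro h; rw [h] at h2; simp at h2
  have p1 : (A - c • (1 : Matrix (Fin 4) (Fin 4) ℂ)) *
      (A - a • (1 : Matrix (Fin 4) (Fin 4) ℂ)) *
      (A - ε • (1 : Matrix (Fin 4) (Fin 4) ℂ)) = 0 := by rw [fac_comm A c a]; exact h1
  have p2 : (A - ε • (1 : Matrix (Fin 4) (Fin 4) ℂ)) *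
      (A - a • (1 : Matrix (Fin 4) (Fin 4) ℂ)) *
      (A - c • (1 : Matrix (Fin 4) (Fin 4) ℂ)) = 0 := by
    rw [fac_comm A ε a, mul_assoc, fac_comm A ε c, ← mul_assoc]; exact h1
  obtain ⟨u, v, hu, hv, huv⟩ : ∃ u v, A *ᵥ u = a • u ∧ A *ᵥ v = c • v ∧
      u ⬝ᵥ (Omega *ᵥ v) = 1 := by
    by_cases hZ : (A - c • (1 : Matrix (Fin 4) (Fin 4) ℂ)) *
      (A - ε • (1 : Matrix (Fin 4) (Fin 4) ℂ)) = 0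
    · obtain ⟨v, hv0, hv⟩ := eig_of_mul hN0 hZ
      obtain ⟨u, hu, huv⟩ := partner hSp hv0 hv (by rw [mul_comm]; exact hlm) hac hab h1
      refine ⟨-u, v, by rw [mulVec_neg, hu, smul_neg], hv, ?_⟩
      rw [om_anti, mulVec_neg, dotProduct_neg, neg_neg, huv]
    · obtain ⟨u, hu0, hu⟩ := eig_of_mul hZ (by rw [← mul_assoc]; exact h1)
      obtain ⟨v, hv, huv⟩ := partner hSp hu0 hu hlm hac.symm hbc.symm p1
      exact ⟨u, v, hu, hv, huv⟩
  obtain ⟨w, hw0, hw⟩ : ∃ w, w ≠ 0 ∧ A *ᵥ w = ε • w := by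
    have hdet : (A - ε • (1 : Matrix (Fin 4) (Fin 4) ℂ)).det = 0 := by
      by_contra hd
      have := Matrix.rank_of_isUnit (A - ε • (1 : Matrix (Fin 4) (Fin 4) ℂ))
        ((Matrix.isUnit_iff_isUnit_det _).2 (isUnit_iff_ne_zero.2 hd))
      rw [h2] at this
      simp at this
    obtain ⟨w, hw0, hw⟩ := Matrix.exists_mulVec_eq_zero_iff.2 hdet
    refine ⟨w, hw0, ?_⟩
    rw [sub_mulVec, smul_mulVec, one_mulVec] at hw
    exact sub_eq_zero.1 hw
  obtain ⟨z, hz, hwz⟩ := partner hSp hw0 hw hεε hab.symm hbc p2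
  have huw := om_orth hSp hu hw (by rwa [mul_comm])
  have huz := om_orth hSp hu hz (by rwa [mul_comm])
  have hvw := om_orth hSp hv hw (by rwa [mul_comm])
  have hvz := om_orth hSp hv hz (by rwa [mul_comm])
  have hwu := om_orth hSp hw hu hεa
  have hzu := om_orth hSp hz hu hεa
  have hwv := om_orth hSp hw hv hεc
  have hzv := om_orth hSp hz hv hεc
  have hvu : v ⬝ᵥ (Omega *ᵥ u) = -1 := by rw [om_anti, huv]
  have hzw : z ⬝ᵥ (Omega *ᵥ w) = -1 := by rw [om_anti, hwz]
  obtain ⟨P, hPdef⟩ : ∃ P : Matrix (Fin 4) (Fin 4) ℂ,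
      P = (Matrix.of ![u, w, v, z])ᵀ := ⟨_, rfl⟩
  have hAP : A * P = P * diagonal ![a, ε, c, ε] := by
    ext i j
    rw [mul_diagonal]
    have e : (A * P) i j = (A *ᵥ (![u, w, v, z] j)) i := by
      subst hPdef; rfl
    rw [e]
    subst hPdef
    fin_cases j <;> simp [hu, hw, hv, hz, mul_comm]
  have hP : Pᵀ * Omega * P = Omega := by
    ext i j
    have e : (Pᵀ * Omega * P) i j = (![u, w, v, z] i) ⬝ᵥ (Omega *ᵥ (![u, w, v, z] j)) := by
      rw [mul_assoc]
      subst hPdef; rfl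
    rw [e]
    fin_cases i <;> fin_cases j <;> simp [om_self, *] <;> simp [Omega]
  have hdet : IsUnit P.det := by
    have hO : Omega * Omega = -1 := by
      ext i j
      fin_cases i <;> fin_cases j <;> simp [Omega, Matrix.mul_apply, Fin.sum_univ_four]
    apply (Matrix.isUnit_iff_isUnit_det _).1
    have : (-(Omega * Pᵀ * Omega)) * P = 1 := by
      rw [neg_mul, mul_assoc, mul_assoc, ← mul_assoc Pᵀ, hP, hO, neg_neg]
    exact IsUnit.of_mul_eq_one_right _ this
  have hPQ := Matrix.mul_nonsing_inv P hdet
  have hQP := Matrix.nonsing_inv_mul P hdet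
  generalize P⁻¹ = Q at hPQ hQP
  have hQ : Qᵀ * Omega * Q = Omega := by
    calc Qᵀ * Omega * Q = (P * Q)ᵀ * Omega * (P * Q) := by
          conv_lhs => rw [← hP]
          rw [transpose_mul]; simp only [mul_assoc]
      _ = Omega := by rw [hPQ, transpose_one, one_mul, mul_one]
  have hDQ : diagonal ![a, ε, c, ε] * Q = Q * A := by
    calc diagonal ![a, ε, c, ε] * Q = (Q * P) * diagonal ![a, ε, c, ε] * Q := by
          rw [hQP, one_mul]
      _ = Q * (A * P) * Q := by rw [hAP]; simp only [mul_assoc]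
      _ = Q * A := by rw [mul_assoc, mul_assoc, hPQ, mul_one]
  let e : sp4cent A ≃ₗ[ℂ] (Fin 4 → ℂ) :=
    { toFun := fun X => ![(Q * X.1 * P) 0 0, (Q * X.1 * P) 1 1, (Q * X.1 * P) 1 3,
        (Q * X.1 * P) 3 1]
      map_add' := by
        intro X Y
        ext i
        fin_cases i <;> simp [mul_add, add_mul]
      map_smul' := by
        intro r X
        ext i
        fin_cases i <;> simp
      invFun := fun f => ⟨P * Mat4 f * Q, conj_mem hDQ hQP hPQ hQ (Mat4_mem a ε c f)⟩
      left_inv := by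
        rintro ⟨X, hX⟩
        apply Subtype.ext
        dsimp only
        rw [Mat4_of_mem hab hac hbc (conj_mem hAP hPQ hQP hP hX)]
        rw [← mul_assoc, ← mul_assoc, hPQ, one_mul, mul_assoc, hPQ, mul_one]
      right_inv := by
        intro f
        dsimp only
        have : Q * (P * Mat4 f * Q) * P = Mat4 f := by
          rw [← mul_assoc, ← mul_assoc, hQP, one_mul, mul_assoc, hQP, mul_one]
        rw [this]
        ext i
        fin_cases i <;> simp [Mat4] }
  have hfin : Module.finrank ℂ (sp4cent A) = 4 := by
    rw [e.finrank_eq]; simp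
  refine ⟨hfin, ?_⟩
  rw [hfin]; norm_num

end
end

section
/- Let α ∈ ℂ× with α² ≠ 1 and let A ∈ Sp₄(ℂ) satisfy (A − αI)²(A − α⁻¹I)² = 0 and (A − αI)(A − α⁻¹I) ≠ 0 (so A has Jordan form αJ(2) ⊕ α⁻¹J(2), denoted [[α] ⊕ [α]] for α ≠ α⁻¹). Then dim_ℂ c(A) = 2, equivalently δ(A) = 8. -/
open Matrix

noncomputable section

def JJ (X : Matrix (Fin 4) (Fin 4) ℂ) : Matrix (Fin 4) (Fin 4) ℂ := -(Omega * Xᵀ * Omega)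

lemma Omega_sq : Omega * Omega = -1 := by
  ext i j
  fin_cases i <;> fin_cases j <;> simp [Omega, Matrix.mul_apply, Fin.sum_univ_four]

lemma Omega_tr : Omegaᵀ = -Omega := by
  ext i j
  fin_cases i <;> fin_cases j <;> simp [Omega]

lemma Omega_sq_assoc (X : Matrix (Fin 4) (Fin 4) ℂ) : Omega * (Omega * X) = -X := by
  rw [← Matrix.mul_assoc, Omega_sq]; simp

lemma JJ_add (X Y) : JJ (X + Y) = JJ X + JJ Y := by
  simp only [JJ, transpose_add, Matrix.mul_add, Matrix.add_mul]; abel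

lemma JJ_smul (c : ℂ) (X) : JJ (c • X) = c • JJ X := by
  simp [JJ, transpose_smul]

lemma JJ_sub (X Y) : JJ (X - Y) = JJ X - JJ Y := by
  simp only [JJ, transpose_sub, Matrix.mul_sub, Matrix.sub_mul]; abel

lemma JJ_mul (X Y) : JJ (X * Y) = JJ Y * JJ X := by
  simp [JJ, transpose_mul, Matrix.mul_assoc, Omega_sq_assoc]

lemma JJ_JJ (X) : JJ (JJ X) = X := by
  simp [JJ, transpose_mul, Matrix.mul_assoc, Omega_sq_assoc, Omega_tr, Omega_sq]

lemma JJ_one : JJ 1 = 1 := by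
  simp [JJ, Omega_sq]

lemma mem_sp4cent (A X) : X ∈ sp4cent A ↔ JJ X = -X ∧ A * X = X * A := by
  change (Xᵀ * Omega + Omega * X = 0 ∧ _) ↔ _
  refine and_congr_left fun _ => ⟨fun h => ?_, fun h => ?_⟩
  · have := congrArg (fun Z => Omega * Z) h
    simp only [Matrix.mul_add, Omega_sq_assoc, Matrix.mul_zero] at this
    rw [JJ, Matrix.mul_assoc, eq_neg_of_add_eq_zero_left this]; simp
  · have := congrArg (fun Z => Omega * Z) h
    simp only [JJ, Matrix.mul_assoc, Matrix.mul_neg, Omega_sq_assoc, neg_neg] at this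
    rw [this]; simp

/-- The purely algebraic core. -/
lemma core (γ : ℂ) (hγ : γ ≠ 0) (A S D : Matrix (Fin 4) (Fin 4) ℂ)
    (hAS : A * S = S * A) (hAD : A * D = D * A) (hSD : S * D = D * S)
    (hXS : ∀ X, A * X = X * A → S * X = X * S)
    (hXD : ∀ X, A * X = X * A → D * X = X * D)
    (hS2 : S * S = 0) (hD2 : S * (D * D) = γ ^ 2 • S) (hS : S ≠ 0)
    (hJS : JJ S = S) (hJD : JJ D = -D) :
    Module.finrank ℂ (sp4cent A) = 2 := by
  set P := S * D - γ • S with hP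
  set M := S * D + γ • S with hM
  have hJSD : JJ (S * D) = -(S * D) := by rw [JJ_mul, hJS, hJD, Matrix.neg_mul, hSD]
  have hJP : JJ P = -M := by
    rw [hP, hM, JJ_sub, JJ_smul, hJSD, hJS]; abel
  have hJ0 : JJ 0 = 0 := by simp [JJ]
  have hPM : M - P = (2 * γ) • S := by rw [hP, hM]; module
  have hMne : M ≠ 0 := by
    intro h
    have hP0 : P = 0 := by
      have := JJ_JJ P
      rw [hJP, h, neg_zero, hJ0] at this
      exact this.symm
    rw [h, hP0, sub_zero] at hPM
    exact (smul_ne_zero (by simpa using hγ) hS) hPM.symm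
  have hPne : P ≠ 0 := by
    intro h
    rw [h, hJ0] at hJP
    exact hMne (neg_eq_zero.1 hJP.symm)
  have hex : ∀ Q : Matrix (Fin 4) (Fin 4) ℂ, Q ≠ 0 → ∃ v, Q *ᵥ v ≠ 0 := by
    intro Q hQ
    by_contra! h
    exact hQ (Matrix.ext_of_mulVec_single fun i => by rw [h, Matrix.zero_mulVec])
  obtain ⟨v, hPv, hMv⟩ : ∃ v, P *ᵥ v ≠ 0 ∧ M *ᵥ v ≠ 0 := by
    obtain ⟨u, hu⟩ := hex P hPne
    obtain ⟨w, hw⟩ := hex M hMne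
    by_cases hu' : M *ᵥ u = 0
    · by_cases hw' : P *ᵥ w = 0
      · exact ⟨u + w, by rw [mulVec_add, hw', add_zero]; exact hu,
          by rw [mulVec_add, hu', zero_add]; exact hw⟩
      · exact ⟨w, hw', hw⟩
    · exact ⟨u, hu, hu'⟩
  -- pair independence
  have hpair : ∀ a c : ℂ, (a • S + c • (S * D)) *ᵥ v = 0 → a = 0 ∧ c = 0 := by
    intro a c h
    have e1 : (D - γ • 1) * (a • S + c • (S * D)) = (a - c * γ) • P := by
      simp only [Matrix.mul_add, Matrix.sub_mul, Matrix.mul_smul, Matrix.smul_mul, Matrix.one_mul,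
        ← Matrix.mul_assoc, ← hSD]
      rw [Matrix.mul_assoc, hD2, hP]; module
    have e2 : (D + γ • 1) * (a • S + c • (S * D)) = (a + c * γ) • M := by
      simp only [Matrix.mul_add, Matrix.add_mul, Matrix.mul_smul, Matrix.smul_mul, Matrix.one_mul,
        ← Matrix.mul_assoc, ← hSD]
      rw [Matrix.mul_assoc, hD2, hM]; module
    have f1 : (a - c * γ) • (P *ᵥ v) = 0 := by
      rw [← Matrix.smul_mulVec, ← e1, ← Matrix.mulVec_mulVec, h, Matrix.mulVec_zero]
    have f2 : (a + c * γ) • (M *ᵥ v) = 0 := by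
      rw [← Matrix.smul_mulVec, ← e2, ← Matrix.mulVec_mulVec, h, Matrix.mulVec_zero]
    have g1 := (smul_eq_zero.1 f1).resolve_right hPv
    have g2 := (smul_eq_zero.1 f2).resolve_right hMv
    have ha : a = 0 := by linear_combination (g1 + g2) / 2
    refine ⟨ha, ?_⟩
    rw [ha, zero_add] at g2
    exact (mul_eq_zero.1 g2).resolve_right hγ
  have hquad : ∀ a b c d : ℂ, (a • 1 + b • S + c • D + d • (S * D)) *ᵥ v = 0 →
      a = 0 ∧ b = 0 ∧ c = 0 ∧ d = 0 := by
    intro a b c d h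
    have e : S * (a • 1 + b • S + c • D + d • (S * D)) = a • S + c • (S * D) := by
      simp only [Matrix.mul_add, Matrix.mul_smul, Matrix.mul_one, hS2, ← Matrix.mul_assoc,
        Matrix.zero_mul]
      simp
    obtain ⟨ha, hc⟩ := hpair a c (by rw [← e, ← Matrix.mulVec_mulVec, h, Matrix.mulVec_zero])
    obtain ⟨hb, hd⟩ := hpair b d (by rw [← h, ha, hc]; simp)
    exact ⟨ha, hb, hc, hd⟩
  let F : Fin 4 → Matrix (Fin 4) (Fin 4) ℂ := ![1, S, D, S * D]
  have hFsum : ∀ g : Fin 4 → ℂ, ∑ i, g i • F i = g 0 • 1 + g 1 • S + g 2 • D + g 3 • (S * D) := by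
    intro g; simp [Fin.sum_univ_four, F]
  have hsumv : ∀ g : Fin 4 → ℂ, ∑ i, g i • (F i *ᵥ v) = (∑ i, g i • F i) *ᵥ v := by
    intro g; simp [Fin.sum_univ_four, Matrix.add_mulVec, Matrix.smul_mulVec]
  have hli : LinearIndependent ℂ (fun i => F i *ᵥ v) := by
    rw [Fintype.linearIndependent_iff]
    intro g hg
    rw [hsumv, hFsum] at hg
    obtain ⟨h0, h1, h2, h3⟩ := hquad _ _ _ _ hg
    intro i; fin_cases i <;> assumption
  have hspan : Submodule.span ℂ (Set.range (fun i => F i *ᵥ v)) = ⊤ :=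
    hli.span_eq_top_of_card_eq_finrank (by simp)
  have hcomm : ∀ X, A * X = X * A → ∃ g : Fin 4 → ℂ, X = ∑ i, g i • F i := by
    intro X hX
    have hm : X *ᵥ v ∈ Submodule.span ℂ (Set.range (fun i => F i *ᵥ v)) := by
      rw [hspan]; trivial
    obtain ⟨g, hg⟩ := (Submodule.mem_span_range_iff_exists_fun ℂ).1 hm
    refine ⟨g, ?_⟩
    rw [hsumv] at hg
    set Y := X - ∑ i, g i • F i with hY
    have hYv : Y *ᵥ v = 0 := by rw [hY, Matrix.sub_mulVec, hg, sub_self]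
    have hAY : A * Y = Y * A := by
      rw [hY, hFsum]
      simp only [Matrix.mul_sub, Matrix.sub_mul, Matrix.mul_add, Matrix.add_mul, Matrix.mul_smul,
        Matrix.smul_mul, hX, hAS, hAD, Matrix.mul_one, Matrix.one_mul]
      rw [← Matrix.mul_assoc, hAS, Matrix.mul_assoc, hAD, Matrix.mul_assoc]
    have hSY := hXS Y hAY
    have hDY := hXD Y hAY
    have hFY : ∀ i, F i * Y = Y * F i := by
      intro i
      fin_cases i
      · simp [F]
      · exact hSY
      · exact hDY
      · change S * D * Y = Y * (S * D)
        rw [Matrix.mul_assoc, hDY, ← Matrix.mul_assoc, hSY, Matrix.mul_assoc]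
    have hker : Submodule.span ℂ (Set.range (fun i => F i *ᵥ v)) ≤ LinearMap.ker Y.mulVecLin := by
      rw [Submodule.span_le]
      rintro _ ⟨i, rfl⟩
      simp only [SetLike.mem_coe, LinearMap.mem_ker, Matrix.mulVecLin_apply]
      rw [Matrix.mulVec_mulVec, ← hFY, ← Matrix.mulVec_mulVec, hYv, Matrix.mulVec_zero]
    rw [hspan] at hker
    have hY0 : Y = 0 := Matrix.ext_of_mulVec_single fun i => by
      rw [Matrix.zero_mulVec]
      exact hker (Submodule.mem_top (x := Pi.single i 1))
    exact sub_eq_zero.1 hY0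
  have hli2 : LinearIndependent ℂ ![D, S * D] := by
    rw [LinearIndependent.pair_iff]
    intro s t h
    obtain ⟨_, _, h3, h4⟩ := hquad 0 0 s t (by
      rw [zero_smul, zero_smul, zero_add, zero_add, h, Matrix.zero_mulVec])
    exact ⟨h3, h4⟩
  have heq : sp4cent A = Submodule.span ℂ (Set.range ![D, S * D]) := by
    apply le_antisymm
    · intro X hX
      rw [mem_sp4cent] at hX
      obtain ⟨hJX, hAX⟩ := hX
      obtain ⟨g, hg⟩ := hcomm X hAX
      rw [hFsum] at hg
      have hz : (2 * g 0) • 1 + (2 * g 1) • S + (0 : ℂ) • D + (0 : ℂ) • (S * D) = 0 := by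
        rw [hg] at hJX
        simp only [JJ_add, JJ_smul, JJ_one, hJS, hJD, hJSD] at hJX
        rw [← sub_eq_zero] at hJX
        rw [← hJX]; module
      obtain ⟨h0, h1, _, _⟩ := hquad _ _ _ _ (by rw [hz, Matrix.zero_mulVec])
      have h0' : g 0 = 0 := by simpa using h0
      have h1' : g 1 = 0 := by simpa using h1
      rw [hg, h0', h1', zero_smul, zero_smul, zero_add, zero_add]
      exact Submodule.add_mem _
        (Submodule.smul_mem _ _ (Submodule.subset_span ⟨0, rfl⟩))
        (Submodule.smul_mem _ _ (Submodule.subset_span ⟨1, rfl⟩))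
    · rw [Submodule.span_le]
      rintro _ ⟨i, rfl⟩
      rw [SetLike.mem_coe, mem_sp4cent]
      fin_cases i
      · exact ⟨hJD, hAD⟩
      · refine ⟨hJSD, ?_⟩
        change A * (S * D) = S * D * A
        rw [← Matrix.mul_assoc, hAS, Matrix.mul_assoc, hAD, Matrix.mul_assoc]
  rw [heq, finrank_span_eq_card hli2]; simp

/-- If `A ∈ Sp₄(ℂ)` has Jordan form `αJ(2) ⊕ α⁻¹J(2)` (denoted `[[α] ⊕ [α]]`) with
`α² ≠ 1`, i.e. `(A − αI)²(A − α⁻¹I)² = 0` while `(A − αI)(A − α⁻¹I) ≠ 0`, then its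
centralizer in `𝔰𝔭₄(ℂ)` has dimension `2`; equivalently `δ(A) = 10 − dim c(A) = 8`. -/
theorem sp4_delta_jordan_double_block (α : ℂ) (hα0 : α ≠ 0) (hα1 : α ^ 2 ≠ 1)
    (A : Matrix (Fin 4) (Fin 4) ℂ) (hUnit : IsUnit A)
    (hSp : Aᵀ * Omega * A = Omega)
    (h1 : (A - α • (1 : Matrix (Fin 4) (Fin 4) ℂ)) ^ 2 *
          (A - α⁻¹ • (1 : Matrix (Fin 4) (Fin 4) ℂ)) ^ 2 = 0)
    (h2 : (A - α • (1 : Matrix (Fin 4) (Fin 4) ℂ)) *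
          (A - α⁻¹ • (1 : Matrix (Fin 4) (Fin 4) ℂ)) ≠ 0) :
    Module.finrank ℂ (sp4cent A) = 2 ∧
      (10 : ℤ) - Module.finrank ℂ (sp4cent A) = 8 := by
  have key : Module.finrank ℂ (sp4cent A) = 2 := by
    set B := JJ A with hB
    have hBA : B * A = 1 := by
      rw [hB, JJ, Matrix.neg_mul, Matrix.mul_assoc, Matrix.mul_assoc, ← Matrix.mul_assoc Aᵀ, hSp,
        Omega_sq, neg_neg]
    have hAB : A * B = 1 := mul_eq_one_comm.1 hBA
    have hJB : JJ B = A := JJ_JJ A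
    have hαα : α * α⁻¹ = 1 := mul_inv_cancel₀ hα0
    generalize α⁻¹ = β at *
    set t := α + β with ht
    set S := A + B - t • (1 : Matrix (Fin 4) (Fin 4) ℂ) with hS
    set D := A - B with hD
    have hAS : A * S = S * A := by
      simp only [hS, Matrix.mul_sub, Matrix.sub_mul, Matrix.mul_add, Matrix.add_mul, hAB, hBA,
        Matrix.mul_smul, Matrix.smul_mul, Matrix.mul_one, Matrix.one_mul]
    have hQ : (A - α • (1 : Matrix (Fin 4) (Fin 4) ℂ)) * (A - β • 1) = A * S := by
      simp only [hS, Matrix.mul_sub, Matrix.sub_mul, Matrix.mul_add, hAB,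
        Matrix.mul_smul, Matrix.smul_mul, Matrix.mul_one, Matrix.one_mul]
      rw [smul_sub, smul_smul, ht, mul_comm β α, hαα]; module
    have hcQ : Commute (A - α • (1 : Matrix (Fin 4) (Fin 4) ℂ)) (A - β • 1) := by
      refine Commute.sub_left (Commute.sub_right rfl ?_) ?_
      · exact (Commute.one_right _).smul_right _
      · exact (Commute.one_left _).smul_left _
    have hS2 : S * S = 0 := by
      rw [← hcQ.mul_pow, hQ, (show Commute A S from hAS).mul_pow] at h1
      have : B ^ 2 * (A ^ 2 * S ^ 2) = S * S := by
        rw [← Matrix.mul_assoc,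
          ← (show Commute B A from hBA.trans hAB.symm).mul_pow, hBA]
        simp [pow_two]
      rw [← this, h1, Matrix.mul_zero]
    have hS0 : S ≠ 0 := by
      rintro h; rw [hQ, h, Matrix.mul_zero] at h2; exact h2 rfl
    have hXB : ∀ X, A * X = X * A → B * X = X * B := by
      intro X hX
      calc B * X = B * (X * A) * B := by rw [Matrix.mul_assoc, Matrix.mul_assoc, hAB, Matrix.mul_one]
        _ = X * B := by rw [← hX, ← Matrix.mul_assoc, hBA, Matrix.one_mul]
    have hXS : ∀ X, A * X = X * A → S * X = X * S := by
      intro X hX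
      simp only [hS, Matrix.mul_sub, Matrix.sub_mul, Matrix.mul_add, Matrix.add_mul, hX, hXB X hX,
        Matrix.mul_smul, Matrix.smul_mul, Matrix.mul_one, Matrix.one_mul]
    have hXD : ∀ X, A * X = X * A → D * X = X * D := by
      intro X hX
      simp only [hD, Matrix.mul_sub, Matrix.sub_mul, hX, hXB X hX]
    have hAD : A * D = D * A := by
      simp only [hD, Matrix.mul_sub, Matrix.sub_mul, hAB, hBA]
    have hγ : α - β ≠ 0 := by
      intro h
      apply hα1
      linear_combination hαα + α * h
    have hDD : D * D = S * S + (2 * t) • S + ((α - β) ^ 2) • (1 : Matrix (Fin 4) (Fin 4) ℂ) := by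
      have e : (α - β) ^ 2 = t ^ 2 - 4 := by rw [ht]; linear_combination (-4) * hαα
      rw [e]
      simp only [hD, hS, Matrix.mul_sub, Matrix.sub_mul, Matrix.mul_add, Matrix.add_mul, hAB, hBA,
        Matrix.mul_smul, Matrix.smul_mul, Matrix.mul_one, Matrix.one_mul]
      module
    refine core (α - β) hγ A S D hAS hAD (hXS D hAD) hXS hXD hS2 ?_ hS0 ?_ ?_
    · rw [hDD, hS2, zero_add, Matrix.mul_add, Matrix.mul_smul, Matrix.mul_smul, hS2, smul_zero,
        zero_add, Matrix.mul_one]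
    · rw [hS, JJ_sub, JJ_add, JJ_smul, JJ_one, hJB, ← hB, add_comm]
    · rw [hD, JJ_sub, hJB, ← hB, neg_sub]
  rw [key]; norm_num

end
end

section
/- The middle convolution preserves irreducibility: Let n ≥ 1, r ≥ 1 and let A = (A_1, …, A_r) ∈ GL_n(ℂ)^r be an irreducible tuple such that, in case n = 1, at least two of the A_i differ from the identity. Then for every λ ∈ ℂ with λ ∉ {0, 1}, the middle convolution MC_λ(A), i.e. the tuple of automorphisms of V = (ℂⁿ)^r/(K+L) induced by (B_1, …, B_r), is irreducible. -/
open Matrix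

noncomputable section

/-- The block matrix `B_k` of the convolution construction: it agrees with the identity
in all block rows except the `k`-th, whose block entries are
`(λ(A_1 − I), …, λ(A_{k−1} − I), λA_k, A_{k+1} − I, …, A_r − I)`. -/
def Bmat {n r : ℕ} (A : Fin r → Matrix (Fin n) (Fin n) ℂ) (lam : ℂ) (k : Fin r) :
    Matrix (Fin r × Fin n) (Fin r × Fin n) ℂ :=
  Matrix.of fun p q =>
    if p.1 = k then
      (if q.1 < k then lam * (A q.1 - 1) p.2 q.2
       else if q.1 = k then lam * (A k) p.2 q.2
       else (A q.1 - 1) p.2 q.2)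
    else (1 : Matrix (Fin r × Fin n) (Fin r × Fin n) ℂ) p q

/-- Projection onto the `k`-th block of `(ℂⁿ)^r`. -/
def blockProj {n r : ℕ} (k : Fin r) : ((Fin r × Fin n) → ℂ) →ₗ[ℂ] (Fin n → ℂ) :=
  LinearMap.funLeft ℂ ℂ fun b => (k, b)

/-- `K = K_1 ⊕ ⋯ ⊕ K_r`, where `K_k` is the `k`-th block copy of `ker (A_k − I)`. -/
def Ksub {n r : ℕ} (A : Fin r → Matrix (Fin n) (Fin n) ℂ) :
    Submodule ℂ ((Fin r × Fin n) → ℂ) :=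
  ⨅ k : Fin r, LinearMap.ker (((A k - 1).mulVecLin).comp (blockProj k))

/-- `L = ∩_k ker (B_k − I)`. -/
def Lsub {n r : ℕ} (A : Fin r → Matrix (Fin n) (Fin n) ℂ) (lam : ℂ) :
    Submodule ℂ ((Fin r × Fin n) → ℂ) :=
  ⨅ k : Fin r, LinearMap.ker ((Bmat A lam k).mulVecLin - LinearMap.id)

/-- The underlying space `V = (ℂⁿ)^r / (K + L)` of the middle convolution `MC_λ(A)`. -/
abbrev MCspace {n r : ℕ} (A : Fin r → Matrix (Fin n) (Fin n) ℂ) (lam : ℂ) :=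
  ((Fin r × Fin n) → ℂ) ⧸ (Ksub A ⊔ Lsub A lam)

/-- A tuple of endomorphisms of `W` is irreducible if the only subspaces of `W` invariant
under every member are `0` and `W`. -/
def IrredEndos {W : Type*} [AddCommGroup W] [Module ℂ W] {r : ℕ}
    (M : Fin r → W →ₗ[ℂ] W) : Prop :=
  ∀ U : Submodule ℂ W, (∀ k, ∀ v ∈ U, M k v ∈ U) → U = ⊥ ∨ U = ⊤


def iotaB {n r : ℕ} (k : Fin r) : (Fin n → ℂ) →ₗ[ℂ] ((Fin r × Fin n) → ℂ) where
  toFun u p := if p.1 = k then u p.2 else 0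
  map_add' u v := by ext p; by_cases h : p.1 = k <;> simp [h]
  map_smul' c u := by ext p; by_cases h : p.1 = k <;> simp [h]

theorem iotaB_apply {n r : ℕ} (k : Fin r) (u : Fin n → ℂ) (p : Fin r × Fin n) :
    iotaB k u p = if p.1 = k then u p.2 else 0 := rfl

theorem Brow {n r : ℕ} (A : Fin r → Matrix (Fin n) (Fin n) ℂ) (lam : ℂ) (k : Fin r)
    (v : Fin r × Fin n → ℂ) (p : Fin r × Fin n) :
    (Bmat A lam k *ᵥ v) p = if p.1 = k then
      ∑ j, (if j < k then lam * ((A j - 1) *ᵥ (fun b => v (j, b))) p.2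
        else if j = k then lam * (A k *ᵥ (fun b => v (j, b))) p.2
        else ((A j - 1) *ᵥ (fun b => v (j, b))) p.2) else v p := by
  by_cases hp : p.1 = k
  · rw [if_pos hp]
    simp only [Matrix.mulVec, dotProduct, Fintype.sum_prod_type, Bmat, Matrix.of_apply, if_pos hp]
    refine Finset.sum_congr rfl fun j _ => ?_
    split_ifs <;> simp [Finset.mul_sum, mul_assoc]
  · rw [if_neg hp]
    have : (Bmat A lam k *ᵥ v) p = ((1 : Matrix (Fin r × Fin n) (Fin r × Fin n) ℂ) *ᵥ v) p := by
      simp only [Matrix.mulVec, dotProduct, Bmat, Matrix.of_apply, if_neg hp]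
    rw [this, Matrix.one_mulVec]

theorem Biota {n r : ℕ} (A : Fin r → Matrix (Fin n) (Fin n) ℂ) (lam : ℂ) (j k : Fin r)
    (u : Fin n → ℂ) :
    Bmat A lam j *ᵥ iotaB k u = if k < j then iotaB k u + lam • iotaB j ((A k - 1) *ᵥ u)
      else if k = j then lam • iotaB k (A k *ᵥ u)
      else iotaB k u + iotaB j ((A k - 1) *ᵥ u) := by
  ext p
  rw [Brow]
  have h0 : ∀ i, (fun b => iotaB k u (i, b)) = if i = k then u else 0 := by
    intro i; ext b; by_cases h : i = k <;> simp [iotaB_apply, h]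
  simp only [h0]
  by_cases hp : p.1 = j
  · rw [if_pos hp, Finset.sum_eq_single k]
    · rcases lt_trichotomy k j with h | h | h
      · simp [h, iotaB_apply, hp, h.ne']
      · subst h; simp [iotaB_apply, hp]
      · simp [h.not_gt, iotaB_apply, hp, h.ne', h.ne]
    · intro i _ hi; simp [hi]
    · simp
  · rw [if_neg hp]
    rcases lt_trichotomy k j with h | h | h
    · simp [h, iotaB_apply, hp]
    · subst h; simp [iotaB_apply, hp]
    · simp [h.not_gt, iotaB_apply, hp, h.ne']

theorem BK {n r : ℕ} (A : Fin r → Matrix (Fin n) (Fin n) ℂ) (lam : ℂ) (k : Fin r)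
    (y : Fin r × Fin n → ℂ) (hy : ∀ j, (A j - 1) *ᵥ (fun b => y (j, b)) = 0) :
    Bmat A lam k *ᵥ y = y + (lam - 1) • iotaB k (fun b => y (k, b)) := by
  ext ⟨i, a⟩
  rw [Brow]
  simp only [hy]
  by_cases hp : i = k
  · subst hp
    have h := hy i
    rw [Matrix.sub_mulVec, Matrix.one_mulVec, sub_eq_zero] at h
    rw [if_pos rfl, Finset.sum_eq_single i]
    · simp [h, iotaB_apply]; ring
    · intro j _ hj; simp [hj]
    · simp
  · simp [hp, iotaB_apply]

theorem Bsub {n r : ℕ} (A : Fin r → Matrix (Fin n) (Fin n) ℂ) (lam : ℂ) (k : Fin r)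
    (v : Fin r × Fin n → ℂ) :
    Bmat A lam k *ᵥ v = v + iotaB k (fun b => (Bmat A lam k *ᵥ v) (k, b) - v (k, b)) := by
  ext ⟨i, a⟩
  by_cases hp : i = k
  · subst hp; simp [iotaB_apply]
  · rw [Brow]; simp [iotaB_apply, hp]

theorem sum_iotaB {n r : ℕ} (v : Fin r × Fin n → ℂ) :
    v = ∑ k, iotaB k (fun b => v (k, b)) := by
  ext ⟨i, a⟩
  simp [iotaB_apply, Finset.sum_apply]

theorem preimage_dichotomy {n r : ℕ} (A : Fin r → Matrix (Fin n) (Fin n) ℂ)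
    (hIrr : IrredEndos fun k => (A k).mulVecLin)
    (lam : ℂ) (hl0 : lam ≠ 0) (hl1 : lam ≠ 1)
    (U : Submodule ℂ ((Fin r × Fin n) → ℂ))
    (hU : ∀ k, ∀ v ∈ U, Bmat A lam k *ᵥ v ∈ U) :
    U ≤ Ksub A ⊔ Lsub A lam ∨ U = ⊤ := by
  have hAk : ∀ k u, iotaB k u ∈ U → iotaB k (A k *ᵥ u) ∈ U := by
    intro k u hu
    have h := hU k _ hu
    rw [Biota, if_neg (lt_irrefl _), if_pos rfl] at h
    exact (U.smul_mem_iff hl0).1 h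
  have hstep : ∀ k j u, iotaB k u ∈ U → iotaB j ((A k - 1) *ᵥ u) ∈ U := by
    intro k j u hu
    have h := hU j _ hu
    rw [Biota] at h
    rcases lt_trichotomy k j with hk | hk | hk
    · rw [if_pos hk] at h
      exact (U.smul_mem_iff hl0).1 ((U.add_mem_iff_right hu).1 h)
    · subst hk
      rw [Matrix.sub_mulVec, Matrix.one_mulVec, map_sub]
      exact U.sub_mem (hAk _ _ hu) hu
    · rw [if_neg hk.not_gt, if_neg hk.ne'] at h
      exact (U.add_mem_iff_right hu).1 h
  let W : Submodule ℂ (Fin n → ℂ) :=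
    ⨆ k, (U.comap (iotaB k)).map (A k - 1).mulVecLin
  have hWU : ∀ j, W ≤ U.comap (iotaB j) := by
    intro j
    refine iSup_le fun k => ?_
    rintro _ ⟨u, hu, rfl⟩
    exact hstep k j u hu
  have hWmem : ∀ k u, iotaB k u ∈ U → (A k - 1) *ᵥ u ∈ W := fun k u hu =>
    Submodule.mem_iSup_of_mem k ⟨u, hu, rfl⟩
  rcases hIrr W (by
    intro k w hw
    have h := hWmem k w (hWU k hw)
    rw [Matrix.sub_mulVec, Matrix.one_mulVec] at h
    exact (W.sub_mem_iff_left hw).1 h) with hW | hW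
  · left
    intro v hv
    have hx : ∀ k, (A k - 1) *ᵥ (fun b => (Bmat A lam k *ᵥ v) (k, b) - v (k, b)) = 0 := by
      intro k
      have h := hU k v hv
      rw [Bsub] at h
      have h2 := hWmem k _ ((U.add_mem_iff_right hv).1 h)
      rw [hW] at h2
      exact h2
    have hl : lam - 1 ≠ 0 := sub_ne_zero.2 hl1
    let y : Fin r × Fin n → ℂ := fun p =>
      (lam - 1)⁻¹ * ((Bmat A lam p.1 *ᵥ v) p - v p)
    have hyk : ∀ k, (fun b => y (k, b)) =
        (lam - 1)⁻¹ • (fun b => (Bmat A lam k *ᵥ v) (k, b) - v (k, b)) := fun k => rfl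
    have hy : ∀ j, (A j - 1) *ᵥ (fun b => y (j, b)) = 0 := by
      intro j
      rw [hyk, Matrix.mulVec_smul, hx, smul_zero]
    have hv' : v = y + (v - y) := by abel
    rw [hv']
    refine Submodule.add_mem_sup ?_ ?_
    · rw [Ksub, Submodule.mem_iInf]
      exact fun k => hy k
    · rw [Lsub, Submodule.mem_iInf]
      intro k
      rw [LinearMap.mem_ker, LinearMap.sub_apply, Matrix.mulVecLin_apply, LinearMap.id_apply,
        Matrix.mulVec_sub, BK A lam k y hy, hyk, map_smul, smul_smul, mul_inv_cancel₀ hl, one_smul]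
      have := Bsub A lam k v
      generalize iotaB k (fun b => (Bmat A lam k *ᵥ v) (k, b) - v (k, b)) = z at this ⊢
      rw [this]
      abel
  · right
    rw [eq_top_iff]
    intro v _
    rw [sum_iotaB v]
    refine U.sum_mem fun k _ => hWU k ?_
    rw [hW]; trivial

/-- **The middle convolution preserves irreducibility.** Let `A = (A_1, …, A_r)` be an
irreducible tuple in `GL_n(ℂ)` (with at least two members different from the identity if
`n = 1`) and `λ ∉ {0, 1}`. Then the tuple `MC_λ(A)` of automorphisms of
`V = (ℂⁿ)^r/(K + L)` induced by `(B_1, …, B_r)` is irreducible. -/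
theorem middle_convolution_irreducible (n r : ℕ) (hn : 1 ≤ n) (hr : 1 ≤ r)
    (A : Fin r → Matrix (Fin n) (Fin n) ℂ)
    (hUnit : ∀ k, IsUnit (A k))
    (hIrr : IrredEndos fun k => (A k).mulVecLin)
    (hn1 : n = 1 → ∃ i j : Fin r, i ≠ j ∧ A i ≠ 1 ∧ A j ≠ 1)
    (lam : ℂ) (hl0 : lam ≠ 0) (hl1 : lam ≠ 1)
    (M : Fin r → MCspace A lam →ₗ[ℂ] MCspace A lam)
    (hM : ∀ k, (M k).comp (Ksub A ⊔ Lsub A lam).mkQ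
        = ((Ksub A ⊔ Lsub A lam).mkQ).comp (Bmat A lam k).mulVecLin) :
    IrredEndos M := by
  intro U hUinv
  have hM' : ∀ k v, M k ((Ksub A ⊔ Lsub A lam).mkQ v)
      = (Ksub A ⊔ Lsub A lam).mkQ (Bmat A lam k *ᵥ v) := fun k v =>
    LinearMap.congr_fun (hM k) v
  have hs := (Ksub A ⊔ Lsub A lam).mkQ_surjective
  rcases preimage_dichotomy A hIrr lam hl0 hl1 (U.comap (Ksub A ⊔ Lsub A lam).mkQ) (by
    intro k v hv
    rw [Submodule.mem_comap] at hv ⊢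
    rw [← hM']
    exact hUinv k _ hv) with h | h
  · left
    rw [eq_bot_iff]
    intro x hx
    obtain ⟨v, rfl⟩ := hs x
    have := h (show v ∈ U.comap _ from hx)
    rw [Submodule.mem_bot]
    simpa using this
  · right
    rw [eq_top_iff]
    intro x _
    obtain ⟨v, rfl⟩ := hs x
    have : v ∈ U.comap (Ksub A ⊔ Lsub A lam).mkQ := by rw [h]; trivial
    exact this

end
end

section
/- The middle convolution is inverted by the middle convolution with the inverse parameter: Let n ≥ 1, r ≥ 1 and let A = (A_1, …, A_r) ∈ GL_n(ℂ)^r be an irreducible tuple such that, in case n = 1, at least two of the A_i differ from the identity. Then for every λ ∈ ℂ with λ ∉ {0, 1}, the tuple MC_{λ^{-1}}(MC_λ(A)) is equivalent to A. -/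
open Matrix

noncomputable section

def iot {n r : ℕ} (k : Fin r) : (Fin n → ℂ) →ₗ[ℂ] ((Fin r × Fin n) → ℂ) where
  toFun u := fun p => if p.1 = k then u p.2 else 0
  map_add' u v := by
    funext p
    by_cases h : p.1 = k <;> simp [h]
  map_smul' c v := by
    funext p
    by_cases h : p.1 = k <;> simp [h]

def cc {r : ℕ} (lam : ℂ) (i k : Fin r) : ℂ := if i ≤ k then lam else 1

def Tm {n r : ℕ} (A : Fin r → Matrix (Fin n) (Fin n) ℂ) (lam : ℂ) (k : Fin r) :
    ((Fin r × Fin n) → ℂ) →ₗ[ℂ] (Fin n → ℂ) :=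
  (lam - 1) • blockProj k + ∑ i, cc lam i k • ((A i - 1).mulVecLin).comp (blockProj i)

lemma Tm_apply {n r : ℕ} (A : Fin r → Matrix (Fin n) (Fin n) ℂ) (lam : ℂ) (k : Fin r)
    (v : (Fin r × Fin n) → ℂ) :
    Tm A lam k v = (lam - 1) • blockProj k v
      + ∑ i, cc lam i k • (A i - 1).mulVecLin (blockProj i v) := by
  simp [Tm, LinearMap.sum_apply]

lemma bp_iot {n r : ℕ} (i k : Fin r) (u : Fin n → ℂ) :
    blockProj i (iot k u) = if i = k then u else 0 := by
  funext b
  by_cases h : i = k <;> simp [blockProj, iot, LinearMap.funLeft, h]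

lemma iot_inj {n r : ℕ} (k : Fin r) (u : Fin n → ℂ) (h : iot k u = 0) : u = 0 := by
  have := bp_iot k k u
  rw [h] at this
  simpa using this.symm

lemma Bmat_mulVec {n r : ℕ} (A : Fin r → Matrix (Fin n) (Fin n) ℂ) (lam : ℂ) (k : Fin r)
    (v : (Fin r × Fin n) → ℂ) :
    (Bmat A lam k).mulVecLin v = v + iot k (Tm A lam k v) := by
  funext p
  obtain ⟨i, b⟩ := p
  by_cases h : i = k
  · subst h
    rw [Tm_apply]
    simp only [Matrix.mulVecLin_apply, Matrix.mulVec, dotProduct, Pi.add_apply, iot,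
      LinearMap.coe_mk, AddHom.coe_mk, if_true, Pi.smul_apply, Finset.sum_apply, Bmat,
      Matrix.of_apply, Fintype.sum_prod_type, blockProj, LinearMap.funLeft_apply, smul_eq_mul]
    have key : ∀ j : Fin r, ∑ x, (if j < i then lam * (A j - 1) b x
        else if j = i then lam * A i b x else (A j - 1) b x) * v (j, x)
        = (if j = i then lam * v (i, b) else 0)
          + cc lam j i * ∑ x, (A j - 1) b x * v (j, x) := by
      intro j
      rcases lt_trichotomy j i with hj | hj | hj
      · simp [hj, hj.ne, cc, hj.le, Finset.mul_sum, mul_assoc]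
      · subst hj
        simp only [lt_irrefl, if_false, if_true, cc, le_refl, Matrix.sub_apply, sub_mul,
          Finset.sum_sub_distrib, Matrix.one_apply, ite_mul, one_mul, zero_mul,
          Finset.sum_ite_eq, Finset.mem_univ, mul_sub, Finset.mul_sum, mul_assoc]
        ring
      · simp [hj.not_gt, hj.ne', cc, hj.not_ge]
    rw [Finset.sum_congr rfl (fun j _ => key j), Finset.sum_add_distrib]
    simp
    ring
  · simp [iot, h, Matrix.mulVec, dotProduct, Bmat, Matrix.one_apply]

lemma mem_K {n r : ℕ} (A : Fin r → Matrix (Fin n) (Fin n) ℂ) (v : (Fin r × Fin n) → ℂ) :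
    v ∈ Ksub A ↔ ∀ k, (A k - 1).mulVecLin (blockProj k v) = 0 := by
  simp only [Ksub, Submodule.mem_iInf, LinearMap.mem_ker, LinearMap.comp_apply]

lemma mem_L {n r : ℕ} (A : Fin r → Matrix (Fin n) (Fin n) ℂ) (lam : ℂ)
    (v : (Fin r × Fin n) → ℂ) :
    v ∈ Lsub A lam ↔ ∀ k, Tm A lam k v = 0 := by
  simp only [Lsub, Submodule.mem_iInf, LinearMap.mem_ker, LinearMap.sub_apply,
    LinearMap.id_apply, Bmat_mulVec, add_sub_cancel_left]
  exact forall_congr' fun k => ⟨iot_inj k _, fun h => by rw [h, map_zero]⟩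

lemma Tm_iot {n r : ℕ} (A : Fin r → Matrix (Fin n) (Fin n) ℂ) (lam : ℂ) (k i : Fin r)
    (u : Fin n → ℂ) :
    Tm A lam k (iot i u) = (if k = i then (lam - 1) • u else 0)
      + cc lam i k • (A i - 1).mulVecLin u := by
  rw [Tm_apply, bp_iot, Finset.sum_eq_single i]
  · simp [bp_iot]
  · intro j _ hj
    simp [bp_iot, hj]
  · simp

/-- scalar tuples -/
lemma scalar_n1 {n r : ℕ} (hn : 1 ≤ n) (A : Fin r → Matrix (Fin n) (Fin n) ℂ)
    (hIrr : IrredEndos fun k => (A k).mulVecLin)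
    (w : Fin n → ℂ) (hw : w ≠ 0) (c : Fin r → ℂ) (h : ∀ k, (A k).mulVecLin w = c k • w) :
    n = 1 := by
  rcases hIrr (Submodule.span ℂ {w}) (by
    intro k v hv
    obtain ⟨a, rfl⟩ := Submodule.mem_span_singleton.1 hv
    show (A k).mulVecLin (a • w) ∈ _
    rw [map_smul, h k]
    exact Submodule.smul_mem _ _ (Submodule.smul_mem _ _ (Submodule.mem_span_singleton_self w)))
    with h1 | h1
  · exact absurd (Submodule.span_singleton_eq_bot.1 h1) hw
  · have h2 := finrank_span_singleton (K := ℂ) hw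
    rw [h1, finrank_top] at h2
    simpa using h2

lemma fix_one {n : ℕ} (hn : n = 1) (A : Matrix (Fin n) (Fin n) ℂ) (w : Fin n → ℂ) (hw : w ≠ 0)
    (h : A.mulVecLin w = w) : A = 1 := by
  subst hn
  have h0 : w 0 ≠ 0 := fun h => hw (by funext i; fin_cases i; exact h)
  have := congrFun h 0
  simp [Matrix.mulVec, dotProduct] at this
  ext i j
  fin_cases i; fin_cases j
  simp
  exact mul_right_cancel₀ h0 (by rw [this, one_mul])

lemma star1 {n r : ℕ} (hn : 1 ≤ n) (A : Fin r → Matrix (Fin n) (Fin n) ℂ)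
    (hIrr : IrredEndos fun k => (A k).mulVecLin)
    (hn1 : n = 1 → ∃ i j : Fin r, i ≠ j ∧ A i ≠ 1 ∧ A j ≠ 1)
    (k : Fin r) (t : ℂ) (w : Fin n → ℂ) (h : ∀ i, i ≠ k → (A i - 1).mulVecLin w = 0)
    (hk : (A k).mulVecLin w = t • w) : w = 0 := by
  by_contra hw
  have h' : ∀ i, i ≠ k → (A i).mulVecLin w = w := by
    intro i hi
    have := h i hi
    simpa [Matrix.sub_mulVec, sub_eq_zero] using this
  have h1 : n = 1 := scalar_n1 hn A hIrr w hw (fun i => if i = k then t else 1) (by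
    intro i
    by_cases hi : i = k
    · subst hi; simpa using hk
    · simpa [hi] using h' i hi)
  obtain ⟨i, j, hij, hi, hj⟩ := hn1 h1
  have hik : i = k := by
    by_contra hik
    exact hi (fix_one h1 _ w hw (h' i hik))
  have hjk : j = k := by
    by_contra hik
    exact hj (fix_one h1 _ w hw (h' j hik))
  exact hij (hik.trans hjk.symm)

/-- An invariant subspace containing `(A_i - 1) W`, `i ≠ k`, and `(A_k - t) W` is everything. -/
lemma star2 {n r : ℕ} (hn : 1 ≤ n) (A : Fin r → Matrix (Fin n) (Fin n) ℂ)
    (hIrr : IrredEndos fun k => (A k).mulVecLin)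
    (hn1 : n = 1 → ∃ i j : Fin r, i ≠ j ∧ A i ≠ 1 ∧ A j ≠ 1)
    (k : Fin r) (t : ℂ) (U : Submodule ℂ (Fin n → ℂ))
    (h : ∀ i, i ≠ k → ∀ w, (A i - 1).mulVecLin w ∈ U)
    (hk : ∀ w, (A k).mulVecLin w - t • w ∈ U) : U = ⊤ := by
  rcases hIrr U (by
    intro i v hv
    show (A i).mulVecLin v ∈ U
    by_cases hi : i = k
    · subst hi
      have := U.add_mem (hk v) (U.smul_mem t hv)
      simpa using this
    · have := U.add_mem (h i hi v) hv
      simpa [Matrix.sub_mulVec] using this) with h1 | h1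
  · exfalso
    subst h1
    have : (fun _ => 1 : Fin n → ℂ) = 0 := star1 hn A hIrr hn1 k t _
      (fun i hi => by simpa using h i hi _) (by
        have := hk (fun _ => 1)
        rwa [Submodule.mem_bot, sub_eq_zero] at this)
    exact one_ne_zero (congrFun this ⟨0, hn⟩)
  · exact h1

lemma Tm_surj {n r : ℕ} (hn : 1 ≤ n) (A : Fin r → Matrix (Fin n) (Fin n) ℂ)
    (hIrr : IrredEndos fun k => (A k).mulVecLin)
    (hn1 : n = 1 → ∃ i j : Fin r, i ≠ j ∧ A i ≠ 1 ∧ A j ≠ 1)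
    (lam : ℂ) (hl0 : lam ≠ 0) (k : Fin r) : LinearMap.range (Tm A lam k) = ⊤ := by
  have hc : ∀ i, cc lam i k ≠ 0 := by
    intro i; unfold cc; split_ifs <;> simp [hl0]
  apply star2 hn A hIrr hn1 k lam⁻¹
  · intro i hi w
    refine ⟨iot i ((cc lam i k)⁻¹ • w), ?_⟩
    rw [Tm_iot, if_neg (Ne.symm hi), zero_add, map_smul, smul_smul, mul_inv_cancel₀ (hc i),
      one_smul]
  · intro w
    refine ⟨iot k (lam⁻¹ • w), ?_⟩
    rw [Tm_iot]
    simp only [if_true, cc, le_refl, map_smul, smul_smul, mul_inv_cancel₀ hl0, one_smul]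
    simp only [Matrix.mulVecLin_apply, Matrix.sub_mulVec, Matrix.one_mulVec]
    funext b
    simp
    field_simp
    ring

lemma iot_mem_KL {n r : ℕ} (hn : 1 ≤ n) (A : Fin r → Matrix (Fin n) (Fin n) ℂ)
    (hIrr : IrredEndos fun k => (A k).mulVecLin)
    (hn1 : n = 1 → ∃ i j : Fin r, i ≠ j ∧ A i ≠ 1 ∧ A j ≠ 1)
    (lam : ℂ) (hl0 : lam ≠ 0) (hl1 : lam ≠ 1) (k : Fin r) (u : Fin n → ℂ)
    (h : iot k u ∈ Ksub A ⊔ Lsub A lam) : (A k - 1).mulVecLin u = 0 := by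
  obtain ⟨x, hx, l, hl, hxl⟩ := Submodule.mem_sup.1 h
  rw [mem_K] at hx
  rw [mem_L] at hl
  have hb : ∀ i, blockProj i x + blockProj i l = if i = k then u else 0 := by
    intro i; rw [← bp_iot, ← hxl, map_add]
  have hli : ∀ i, i ≠ k → (A i - 1).mulVecLin (blockProj i l) = 0 := by
    intro i hi
    have h1 := congrArg (A i - 1).mulVecLin (hb i)
    rwa [map_add, hx i, if_neg hi, map_zero, zero_add] at h1
  have hk1 : (A k - 1).mulVecLin u = (A k - 1).mulVecLin (blockProj k l) := by
    have h1 := congrArg (A k - 1).mulVecLin (hb k)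
    rw [map_add, hx k, if_pos rfl, zero_add] at h1
    exact h1.symm
  set w := (A k - 1).mulVecLin (blockProj k l) with hw
  have hT : ∀ i, (lam - 1) • blockProj i l + cc lam k i • w = 0 := by
    intro i
    rw [← hl i, Tm_apply, Finset.sum_eq_single k]
    · intro j _ hj
      rw [hli j hj, smul_zero]
    · simp
  have hc : ∀ i, cc lam k i ≠ 0 := by
    intro i; unfold cc; split_ifs <;> simp [hl0]
  rw [hk1]
  apply star1 hn A hIrr hn1 k lam⁻¹
  · intro i hi
    have h1 := congrArg (A i - 1).mulVecLin (hT i)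
    rw [map_add, map_smul, map_smul, hli i hi, smul_zero, zero_add, map_zero] at h1
    exact (smul_eq_zero.1 h1).resolve_left (hc i)
  · have h1 := congrArg (A k - 1).mulVecLin (hT k)
    rw [map_add, map_smul, map_smul, ← hw, map_zero] at h1
    simp only [cc, le_refl, if_true] at h1
    clear_value w
    simp only [Matrix.mulVecLin_apply, Matrix.sub_mulVec, Matrix.one_mulVec] at h1 ⊢
    funext b
    have h2 := congrFun h1 b
    simp at h2 ⊢
    field_simp
    linear_combination h2

lemma main_abs {n r N : ℕ} (hn : 1 ≤ n) (hr : 1 ≤ r) (A : Fin r → Matrix (Fin n) (Fin n) ℂ)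
    (hIrr : IrredEndos fun k => (A k).mulVecLin)
    (hn1 : n = 1 → ∃ i j : Fin r, i ≠ j ∧ A i ≠ 1 ∧ A j ≠ 1)
    (lam : ℂ) (hl0 : lam ≠ 0) (hl1 : lam ≠ 1)
    (p : ((Fin r × Fin n) → ℂ) →ₗ[ℂ] (Fin N → ℂ)) (hp : LinearMap.range p = ⊤)
    (hker : LinearMap.ker p = Ksub A ⊔ Lsub A lam)
    (A' : Fin r → Matrix (Fin N) (Fin N) ℂ)
    (hA' : ∀ k v, (A' k - 1).mulVecLin (p v) = p (iot k (Tm A lam k v))) :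
    ∃ Ps : ((Fin r × Fin N) → ℂ) →ₗ[ℂ] (Fin n → ℂ),
      LinearMap.range Ps = ⊤ ∧ LinearMap.ker Ps = Ksub A' ⊔ Lsub A' lam⁻¹ ∧
      ∀ k m, Ps ((Bmat A' lam⁻¹ k).mulVecLin m) = (A k).mulVecLin (Ps m) := by
  obtain ⟨sg, hsg⟩ := LinearMap.exists_rightInverse_of_surjective p hp
  have hsg' : ∀ x, p (sg x) = x := fun x => by
    have := congrArg (fun f => f x) hsg
    simpa using this
  let Y : Fin r → (Fin N → ℂ) →ₗ[ℂ] (Fin n → ℂ) := fun k =>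
    ((A k - 1).mulVecLin).comp ((Tm A lam k).comp sg)
  have hY0 : ∀ k v, v ∈ Ksub A ⊔ Lsub A lam → (A k - 1).mulVecLin (Tm A lam k v) = 0 := by
    intro k v hv
    obtain ⟨x, hx, l, hl, rfl⟩ := Submodule.mem_sup.1 hv
    rw [mem_K] at hx
    rw [mem_L] at hl
    rw [map_add, hl k, add_zero, Tm_apply, Finset.sum_eq_zero, add_zero, map_smul, hx k, smul_zero]
    intro i _
    rw [hx i, smul_zero]
  have hY : ∀ k v, Y k (p v) = (A k - 1).mulVecLin (Tm A lam k v) := by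
    intro k v
    show (A k - 1).mulVecLin (Tm A lam k (sg (p v))) = _
    rw [← sub_eq_zero, ← map_sub, ← map_sub]
    apply hY0
    rw [← hker, LinearMap.mem_ker, map_sub, hsg', sub_self]
  let Ps : ((Fin r × Fin N) → ℂ) →ₗ[ℂ] (Fin n → ℂ) := ∑ k, (Y k).comp (blockProj k)
  have hPs : ∀ m, Ps m = ∑ k, Y k (blockProj k m) := by
    intro m; simp [Ps, LinearMap.sum_apply]
  have hPsi : ∀ k x, Ps (iot k x) = Y k x := by
    intro k x
    rw [hPs, Finset.sum_eq_single k]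
    · simp [bp_iot]
    · intro j _ hj; simp [bp_iot, hj]
    · simp
  -- the vectors `u`
  let u : ((Fin r × Fin N) → ℂ) → Fin r → (Fin n → ℂ) := fun m k =>
    Tm A lam k (sg (blockProj k m))
  have hYu : ∀ m k, Y k (blockProj k m) = (A k - 1).mulVecLin (u m k) := fun m k => rfl
  have hAu : ∀ m k, (A' k - 1).mulVecLin (blockProj k m) = p (iot k (u m k)) := by
    intro m k
    rw [← hA', hsg']
  -- key computation
  have hcc : ∀ i k : Fin r, cc lam⁻¹ i k * cc lam i k = 1 := by
    intro i k
    unfold cc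
    split_ifs <;> simp [hl0]
  let s : ((Fin r × Fin N) → ℂ) → Fin r → ((Fin r × Fin n) → ℂ) := fun m k =>
    ∑ i, cc lam⁻¹ i k • iot i (u m i)
  have hTs : ∀ m k, Tm A lam k (s m k) = (1 - lam⁻¹) • u m k + Ps m := by
    intro m k
    simp only [s, map_sum, map_smul, Tm_iot, smul_add, smul_smul, hcc, one_smul,
      Finset.sum_add_distrib, hPs, hYu, smul_ite, smul_zero, Finset.sum_ite_eq, Finset.mem_univ,
      if_true]
    congr 2
    simp only [cc, le_refl, if_true]
    field_simp
  have hT' : ∀ m k, Tm A' lam⁻¹ k m = (lam⁻¹ - 1) • blockProj k m + p (s m k) := by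
    intro m k
    simp only [Tm_apply, hAu, s, map_sum, map_smul]
  have hYT' : ∀ m k, Y k (Tm A' lam⁻¹ k m) = (A k - 1).mulVecLin (Ps m) := by
    intro m k
    rw [hT', map_add, map_smul, hY, hTs, hYu, map_add, map_smul, ← add_assoc, ← add_smul]
    simp
  have hlm : lam⁻¹ - 1 ≠ 0 := by
    rw [sub_ne_zero]
    intro h
    exact hl1 (by simpa using h)
  refine ⟨Ps, ?_, le_antisymm ?_ (sup_le ?_ ?_), ?_⟩
  · have hi : ∀ i w, (A i - 1).mulVecLin w ∈ LinearMap.range Ps := by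
      intro i w
      have hw : w ∈ LinearMap.range (Tm A lam i) := by
        rw [Tm_surj hn A hIrr hn1 lam hl0 i]; trivial
      obtain ⟨v, rfl⟩ := hw
      exact ⟨iot i (p v), by rw [hPsi, hY]⟩
    apply star2 hn A hIrr hn1 ⟨0, hr⟩ 1
    · intro i _ w; exact hi i w
    · intro w
      have := hi ⟨0, hr⟩ w
      simpa [Matrix.sub_mulVec] using this
  · intro m hm
    rw [LinearMap.mem_ker] at hm
    let m' : (Fin r × Fin N) → ℂ := fun q => (1 - lam⁻¹)⁻¹ * p (s m q.1) q.2
    have hm' : ∀ k, blockProj k m' = p ((1 - lam⁻¹)⁻¹ • s m k) := by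
      intro k
      rw [map_smul]
      funext b
      simp [m', blockProj, LinearMap.funLeft_apply]
    have hlm2 : 1 - lam⁻¹ ≠ 0 := by
      intro h; apply hlm; rw [← neg_sub, h, neg_zero]
    have hq : ∀ k, (A' k - 1).mulVecLin (blockProj k m')
        = (A' k - 1).mulVecLin (blockProj k m) := by
      intro k
      rw [hm', hA', map_smul (Tm A lam k), hTs, hm, add_zero, smul_smul, inv_mul_cancel₀ hlm2,
        one_smul, hAu]
    have h1 : m' ∈ Lsub A' lam⁻¹ := by
      rw [mem_L]
      intro k
      have h2 := hT' m k
      rw [Tm_apply, add_right_inj] at h2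
      rw [Tm_apply]
      simp only [hq]
      rw [h2, hm', map_smul, smul_smul, ← neg_sub, neg_mul, mul_inv_cancel₀ hlm2]
      simp
    have h2 : m - m' ∈ Ksub A' := by
      rw [mem_K]
      intro k
      rw [map_sub, map_sub, hq, sub_self]
    exact Submodule.mem_sup.2 ⟨_, h2, _, h1, sub_add_cancel _ _⟩
  · intro m hm
    rw [mem_K] at hm
    rw [LinearMap.mem_ker, hPs]
    apply Finset.sum_eq_zero
    intro k _
    rw [hYu]
    apply iot_mem_KL hn A hIrr hn1 lam hl0 hl1
    rw [← hker, LinearMap.mem_ker, ← hAu, hm k]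
  · intro m hm
    rw [mem_L] at hm
    rw [LinearMap.mem_ker]
    have h0 : ∀ k, (A k - 1).mulVecLin (Ps m) = 0 := by
      intro k
      rw [← hYT', hm k, map_zero]
    apply star1 hn A hIrr hn1 ⟨0, hr⟩ 1 _ (fun i _ => h0 i)
    have := h0 ⟨0, hr⟩
    simpa [Matrix.sub_mulVec, sub_eq_zero] using this
  · intro k m
    rw [Bmat_mulVec, map_add, hPsi, hYT']
    simp [Matrix.sub_mulVec]

/-- **The middle convolution is inverted by the middle convolution with inverse
parameter.** Let `A = (A_1, …, A_r)` be an irreducible tuple in `GL_n(ℂ)` (with at least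
two members different from the identity if `n = 1`) and `λ ∉ {0, 1}`. Let `M` be the
tuple `MC_λ(A)` on `V = (ℂⁿ)^r/(K + L)`, identify `V` with `ℂ^N` via any linear
isomorphism `e` and let `A'` be the corresponding matrix tuple. Then any tuple `M'`
realizing `MC_{λ⁻¹}(A')` is equivalent to `A`. -/
theorem middle_convolution_inverse (n r : ℕ) (hn : 1 ≤ n) (hr : 1 ≤ r)
    (A : Fin r → Matrix (Fin n) (Fin n) ℂ)
    (hUnit : ∀ k, IsUnit (A k))
    (hIrr : IrredEndos fun k => (A k).mulVecLin)
    (hn1 : n = 1 → ∃ i j : Fin r, i ≠ j ∧ A i ≠ 1 ∧ A j ≠ 1)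
    (lam : ℂ) (hl0 : lam ≠ 0) (hl1 : lam ≠ 1)
    (M : Fin r → MCspace A lam →ₗ[ℂ] MCspace A lam)
    (hM : ∀ k, (M k).comp (Ksub A ⊔ Lsub A lam).mkQ
        = ((Ksub A ⊔ Lsub A lam).mkQ).comp (Bmat A lam k).mulVecLin)
    (N : ℕ) (e : MCspace A lam ≃ₗ[ℂ] (Fin N → ℂ))
    (A' : Fin r → Matrix (Fin N) (Fin N) ℂ)
    (hA' : ∀ k, A' k = LinearMap.toMatrix' (e.conj (M k)))
    (M' : Fin r → MCspace A' lam⁻¹ →ₗ[ℂ] MCspace A' lam⁻¹)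
    (hM' : ∀ k, (M' k).comp (Ksub A' ⊔ Lsub A' lam⁻¹).mkQ
        = ((Ksub A' ⊔ Lsub A' lam⁻¹).mkQ).comp (Bmat A' lam⁻¹ k).mulVecLin) :
    ∃ φ : (Fin n → ℂ) ≃ₗ[ℂ] MCspace A' lam⁻¹,
      ∀ k, ∀ v : Fin n → ℂ, M' k (φ v) = φ ((A k).mulVec v) := by
  let Q := Ksub A ⊔ Lsub A lam
  obtain ⟨Ps, hPr, hPk, hPB⟩ := main_abs hn hr A hIrr hn1 lam hl0 hl1
    (e.toLinearMap.comp (Ksub A ⊔ Lsub A lam).mkQ)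
    (by rw [LinearMap.range_comp, Submodule.range_mkQ, Submodule.map_top, LinearEquiv.range])
    (by rw [LinearEquiv.ker_comp, Submodule.ker_mkQ]) A' (by
      intro k v
      have h1 := congrArg (fun f => f v) (hM k)
      simp only [LinearMap.comp_apply, Bmat_mulVec, map_add] at h1
      have h2 : ∀ x, (A' k).mulVec x = e (M k (e.symm x)) := by
        intro x
        rw [hA', LinearMap.toMatrix'_mulVec, LinearEquiv.conj_apply_apply]
      rw [Matrix.mulVecLin_apply, Matrix.sub_mulVec, Matrix.one_mulVec, h2]
      simp only [LinearMap.comp_apply, LinearEquiv.coe_coe, LinearEquiv.symm_apply_apply]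
      rw [h1, map_add, add_sub_cancel_left])
  let f : MCspace A' lam⁻¹ ≃ₗ[ℂ] (Fin n → ℂ) :=
    (Submodule.quotEquivOfEq _ _ hPk.symm).trans
      (Ps.quotKerEquivOfSurjective (LinearMap.range_eq_top.1 hPr))
  have hf : ∀ m, f ((Ksub A' ⊔ Lsub A' lam⁻¹).mkQ m) = Ps m := fun m => rfl
  refine ⟨f.symm, fun k v => ?_⟩
  rw [LinearEquiv.eq_symm_apply]
  obtain ⟨m, hm⟩ := Submodule.mkQ_surjective _ (f.symm v)
  have hv : v = Ps m := by rw [← hf, hm, LinearEquiv.apply_symm_apply]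
  have h1 := congrArg (fun g => g m) (hM' k)
  simp only [LinearMap.comp_apply] at h1
  rw [← hm, h1, hf, hPB, hv, Matrix.mulVecLin_apply]

end
end

section
/- MC_{−1} turns symplectic tuples into orthogonal ones and orthogonal into symplectic: Let n ≥ 1, r ≥ 1 and let A = (A_1, …, A_r) ∈ GL_n(ℂ)^r be an irreducible tuple such that, in case n = 1, at least two of the A_i differ from the identity. Suppose there is a nondegenerate bilinear form b on ℂⁿ which is alternating (respectively symmetric) and satisfies b(A_i v, A_i w) = b(v, w) for all v, w ∈ ℂⁿ and all 1 ≤ i ≤ r. Then there exists a nondegenerate bilinear form b' on the quotient V = (ℂⁿ)^r/(K+L) which is symmetric (respectively alternating) and is invariant under every element of the tuple MC_{−1}(A). -/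
open Matrix

noncomputable section

section helpers

variable {n r : ℕ}

def phiM (A : Fin r → Matrix (Fin n) (Fin n) ℂ) (k : Fin r) :
    ((Fin r × Fin n) → ℂ) →ₗ[ℂ] (Fin n → ℂ) :=
  (blockProj k).comp ((Bmat A (-1) k).mulVecLin - LinearMap.id)

def embM (k : Fin r) (y : Fin n → ℂ) : (Fin r × Fin n) → ℂ :=
  fun p => if p.1 = k then y p.2 else 0

def ccM (j k : Fin r) : ℂ := if j < k then -1 else if j = k then 0 else 1

theorem ccM_anti (j k : Fin r) : ccM j k = - ccM k j := by
  unfold ccM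
  rcases lt_trichotomy j k with h | h | h
  · simp [h, h.not_gt, h.ne']
  · simp [h]
  · simp [h, h.not_gt, h.ne']

theorem phiM_apply (A : Fin r → Matrix (Fin n) (Fin n) ℂ) (k : Fin r)
    (v : (Fin r × Fin n) → ℂ) :
    phiM A k v = ∑ j, ccM j k • ((A j - 1) *ᵥ blockProj j v)
      - (A k *ᵥ blockProj k v + blockProj k v) := by
  ext a
  have h1 : (Bmat A (-1) k *ᵥ v) (k, a)
      = ∑ j, ((ccM j k • ((A j - 1) *ᵥ blockProj j v)) a
        - if j = k then (A k *ᵥ blockProj k v) a else 0) := by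
    simp only [Matrix.mulVec, dotProduct, Fintype.sum_prod_type, Bmat, Matrix.of_apply, if_true]
    refine Finset.sum_congr rfl fun j _ => ?_
    rcases lt_trichotomy j k with h | h | h
    · simp [h, ccM, h.ne, Matrix.mulVec, dotProduct, blockProj, LinearMap.funLeft_apply, sub_mul]
    · subst h
      simp [ccM, Matrix.mulVec, dotProduct, blockProj, LinearMap.funLeft_apply]
    · simp [h.not_gt, ccM, h.ne', Matrix.mulVec, dotProduct, blockProj, LinearMap.funLeft_apply]
  have h2 : phiM A k v a = (Bmat A (-1) k *ᵥ v) (k, a) - v (k, a) := rfl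
  rw [h2, h1, Finset.sum_sub_distrib]
  simp only [Finset.sum_ite_eq', Finset.mem_univ, if_true, Pi.sub_apply, Pi.add_apply,
    Finset.sum_apply]
  have h3 : blockProj k v a = v (k, a) := rfl
  rw [h3]; ring

theorem Bmat_apply (A : Fin r → Matrix (Fin n) (Fin n) ℂ) (k : Fin r)
    (v : (Fin r × Fin n) → ℂ) :
    Bmat A (-1) k *ᵥ v = v + embM k (phiM A k v) := by
  ext ⟨i, a⟩
  by_cases h : i = k
  · subst h
    have h2 : phiM A i v a = (Bmat A (-1) i *ᵥ v) (i, a) - v (i, a) := rfl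
    simp [embM, h2]
  · have : (Bmat A (-1) k *ᵥ v) (i, a) = ((1 : Matrix (Fin r × Fin n) (Fin r × Fin n) ℂ) *ᵥ v) (i, a) := by
      simp only [Matrix.mulVec, dotProduct, Bmat, Matrix.of_apply, if_neg h]
    rw [this]
    simp [embM, h]

theorem blockProj_embM (i k : Fin r) (y : Fin n → ℂ) :
    blockProj i (embM k y) = if i = k then y else 0 := by
  ext a
  by_cases h : i = k <;> simp [blockProj, embM, LinearMap.funLeft_apply, h]

def betaM (A : Fin r → Matrix (Fin n) (Fin n) ℂ)
    (b : (Fin n → ℂ) →ₗ[ℂ] (Fin n → ℂ) →ₗ[ℂ] ℂ) :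
    ((Fin r × Fin n) → ℂ) →ₗ[ℂ] ((Fin r × Fin n) → ℂ) →ₗ[ℂ] ℂ :=
  ∑ k, b.compl₁₂ (phiM A k) (((A k - 1).mulVecLin).comp (blockProj k))

theorem betaM_apply (A : Fin r → Matrix (Fin n) (Fin n) ℂ)
    (b : (Fin n → ℂ) →ₗ[ℂ] (Fin n → ℂ) →ₗ[ℂ] ℂ) (v w : (Fin r × Fin n) → ℂ) :
    betaM A b v w = ∑ k, b (phiM A k v) ((A k - 1) *ᵥ blockProj k w) := by
  simp only [betaM, LinearMap.sum_apply]
  rfl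

theorem betaM_emb (A : Fin r → Matrix (Fin n) (Fin n) ℂ)
    (b : (Fin n → ℂ) →ₗ[ℂ] (Fin n → ℂ) →ₗ[ℂ] ℂ) (v : (Fin r × Fin n) → ℂ) (k : Fin r)
    (y : Fin n → ℂ) :
    betaM A b v (embM k y) = b (phiM A k v) ((A k - 1) *ᵥ y) := by
  rw [betaM_apply, Finset.sum_eq_single k]
  · simp [blockProj_embM]
  · intro i _ h
    simp [blockProj_embM, h]
  · simp

theorem phiM_emb (A : Fin r → Matrix (Fin n) (Fin n) ℂ) (k : Fin r) (y : Fin n → ℂ) :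
    phiM A k (embM k y) = - (A k *ᵥ y + y) := by
  rw [phiM_apply, Finset.sum_eq_zero]
  · simp [blockProj_embM]
  · intro i _
    by_cases h : i = k
    · simp [ccM, h]
    · simp [blockProj_embM, h]

theorem betaM_symm (A : Fin r → Matrix (Fin n) (Fin n) ℂ)
    (b : (Fin n → ℂ) →ₗ[ℂ] (Fin n → ℂ) →ₗ[ℂ] ℂ)
    (hbinv : ∀ k, ∀ v w, b ((A k).mulVec v) ((A k).mulVec w) = b v w)
    (s : ℂ) (hs : ∀ v w, b v w = s * b w v)
    (v w : (Fin r × Fin n) → ℂ) : betaM A b v w = - s * betaM A b w v := by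
  have key : ∀ v w, betaM A b v w
      = ∑ k, ∑ j, ccM j k * b ((A j - 1) *ᵥ blockProj j v) ((A k - 1) *ᵥ blockProj k w)
        + ∑ k, (b (A k *ᵥ blockProj k v) (blockProj k w)
          - b (blockProj k v) (A k *ᵥ blockProj k w)) := by
    intro v w
    rw [betaM_apply, ← Finset.sum_add_distrib]
    refine Finset.sum_congr rfl fun k _ => ?_
    rw [phiM_apply]
    simp only [map_sub, map_add, map_sum, map_smul, LinearMap.sub_apply, LinearMap.add_apply,
      LinearMap.sum_apply, LinearMap.smul_apply, smul_eq_mul]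
    rw [sub_eq_add_neg]
    congr 1
    rw [Matrix.sub_mulVec (A k) 1, Matrix.one_mulVec]
    simp only [map_sub, hbinv]
    ring
  rw [key v w, key w v, mul_add, Finset.mul_sum, Finset.mul_sum]
  congr 1
  · rw [Finset.sum_comm]
    refine Finset.sum_congr rfl fun k _ => ?_
    rw [Finset.mul_sum]
    refine Finset.sum_congr rfl fun j _ => ?_
    rw [hs, ccM_anti k j]
    ring
  · refine Finset.sum_congr rfl fun k _ => ?_
    rw [hs (A k *ᵥ blockProj k v), hs (blockProj k v)]
    ring

theorem betaM_inv (A : Fin r → Matrix (Fin n) (Fin n) ℂ)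
    (b : (Fin n → ℂ) →ₗ[ℂ] (Fin n → ℂ) →ₗ[ℂ] ℂ)
    (hbinv : ∀ k, ∀ v w, b ((A k).mulVec v) ((A k).mulVec w) = b v w)
    (s : ℂ) (hs : ∀ v w, b v w = s * b w v) (k : Fin r)
    (v w : (Fin r × Fin n) → ℂ) :
    betaM A b (Bmat A (-1) k *ᵥ v) (Bmat A (-1) k *ᵥ w) = betaM A b v w := by
  rw [Bmat_apply, Bmat_apply]
  simp only [map_add, LinearMap.add_apply]
  rw [betaM_emb, betaM_emb, phiM_emb, betaM_symm A b hbinv s hs (embM k _) w, betaM_emb]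
  generalize phiM A k v = y
  generalize phiM A k w = x
  simp only [Matrix.sub_mulVec, Matrix.one_mulVec, map_sub, map_neg, map_add, LinearMap.neg_apply,
    LinearMap.add_apply, hbinv]
  rw [hs y x, hs (A k *ᵥ y) x]
  ring

theorem betaM_rad (A : Fin r → Matrix (Fin n) (Fin n) ℂ)
    (hUnit : ∀ k, IsUnit (A k))
    (b : (Fin n → ℂ) →ₗ[ℂ] (Fin n → ℂ) →ₗ[ℂ] ℂ)
    (hbnd : ∀ v, (∀ w, b v w = 0) → v = 0)
    (hbinv : ∀ k, ∀ v w, b ((A k).mulVec v) ((A k).mulVec w) = b v w)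
    (v : (Fin r × Fin n) → ℂ) :
    v ∈ Ksub A ⊔ Lsub A (-1) ↔ betaM A b v = 0 := by
  have hK : ∀ u : (Fin r × Fin n) → ℂ, u ∈ Ksub A ↔ ∀ k, A k *ᵥ blockProj k u = blockProj k u := by
    intro u
    simp [Ksub, Submodule.mem_iInf, Matrix.sub_mulVec, sub_eq_zero]
  have hL : ∀ u : (Fin r × Fin n) → ℂ, u ∈ Lsub A (-1) ↔ ∀ k, phiM A k u = 0 := by
    intro u
    simp only [Lsub, Submodule.mem_iInf, LinearMap.mem_ker]
    refine forall_congr' fun k => ⟨fun h => by simp only [phiM, LinearMap.comp_apply, h, map_zero],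
      fun h => ?_⟩
    simp only [LinearMap.sub_apply, Matrix.mulVecLin_apply, LinearMap.id_apply, Bmat_apply, h]
    ext p; simp [embM]
  have hphiK : ∀ u ∈ Ksub A, ∀ k, phiM A k u = - (2 : ℂ) • blockProj k u := by
    intro u hu k
    rw [hK] at hu
    rw [phiM_apply, Finset.sum_eq_zero, hu k]
    · module
    · intro j _
      rw [Matrix.sub_mulVec, hu j]; simp
  constructor
  · intro hv
    obtain ⟨x, hx, y, hy, rfl⟩ := Submodule.mem_sup.1 hv
    refine LinearMap.ext fun w => ?_
    rw [betaM_apply]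
    refine Finset.sum_eq_zero fun k _ => ?_
    rw [map_add, (hL y).1 hy k, add_zero, hphiK x hx k, Matrix.sub_mulVec, Matrix.one_mulVec]
    have := hbinv k (blockProj k x) (blockProj k w)
    rw [(hK x).1 hx k] at this
    simp [this]
  · intro h
    have hfix : ∀ k, A k *ᵥ phiM A k v = phiM A k v := by
      intro k
      rw [← sub_eq_zero]
      apply hbnd
      intro w
      obtain ⟨x, rfl⟩ := (Matrix.mulVec_surjective_iff_isUnit.2 (hUnit k)) w
      have h1 := betaM_emb A b v k x
      rw [h] at h1
      simp only [LinearMap.zero_apply, Matrix.sub_mulVec, Matrix.one_mulVec, map_sub] at h1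
      rw [map_sub, LinearMap.sub_apply, hbinv]
      linear_combination h1
    let x : (Fin r × Fin n) → ℂ := fun p => -(1/2 : ℂ) * phiM A p.1 v p.2
    have hxp : ∀ k, blockProj k x = -(1/2 : ℂ) • phiM A k v := fun k => by
      ext a; simp [blockProj, x, LinearMap.funLeft_apply]
    have hx : x ∈ Ksub A := by
      rw [hK]; intro k
      rw [hxp, Matrix.mulVec_smul, hfix]
    rw [Submodule.mem_sup]
    refine ⟨x, hx, v - x, ?_, by abel⟩
    rw [hL]; intro k
    rw [map_sub, hphiK x hx, hxp]
    module

theorem mcM_main (A : Fin r → Matrix (Fin n) (Fin n) ℂ)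
    (hUnit : ∀ k, IsUnit (A k))
    (b : (Fin n → ℂ) →ₗ[ℂ] (Fin n → ℂ) →ₗ[ℂ] ℂ)
    (hbnd : ∀ v, (∀ w, b v w = 0) → v = 0)
    (hbinv : ∀ k, ∀ v w, b ((A k).mulVec v) ((A k).mulVec w) = b v w)
    (M : Fin r → MCspace A (-1) →ₗ[ℂ] MCspace A (-1))
    (hM : ∀ k, (M k).comp (Ksub A ⊔ Lsub A (-1)).mkQ
        = ((Ksub A ⊔ Lsub A (-1)).mkQ).comp (Bmat A (-1) k).mulVecLin)
    (s : ℂ) (hs : ∀ v w, b v w = s * b w v) :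
    ∃ b' : MCspace A (-1) →ₗ[ℂ] MCspace A (-1) →ₗ[ℂ] ℂ,
        (∀ x, (∀ y, b' x y = 0) → x = 0) ∧
        (∀ x y, b' x y = - s * b' y x) ∧
        (∀ k, ∀ x y, b' (M k x) (M k y) = b' x y) := by
  have hrad := betaM_rad A hUnit b hbnd hbinv
  have hsym := betaM_symm A b hbinv s hs
  let N := Ksub A ⊔ Lsub A (-1)
  have h1 : N ≤ LinearMap.ker (betaM A b) := fun v hv => (hrad v).1 hv
  let f := N.liftQ (betaM A b) h1
  have hf : ∀ v w, f (N.mkQ v) w = betaM A b v w := fun v w => rfl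
  have h2 : N ≤ LinearMap.ker f.flip := by
    intro w hw
    rw [LinearMap.mem_ker]
    refine LinearMap.ext fun x => ?_
    obtain ⟨v, rfl⟩ := N.mkQ_surjective x
    change betaM A b v w = 0
    rw [hsym, (hrad w).1 hw]; simp
  let g := (N.liftQ f.flip h2).flip
  have hg : ∀ v w, g (N.mkQ v) (N.mkQ w) = betaM A b v w := fun v w => rfl
  have hsurj := N.mkQ_surjective
  refine ⟨g, ?_, ?_, ?_⟩
  · intro x hx
    obtain ⟨v, rfl⟩ := hsurj x
    have : v ∈ N := by
      refine (hrad v).2 (LinearMap.ext fun w => ?_)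
      rw [← hg, hx]; rfl
    simpa using this
  · intro x y
    obtain ⟨v, rfl⟩ := hsurj x
    obtain ⟨w, rfl⟩ := hsurj y
    rw [hg, hg, hsym]
  · intro k x y
    obtain ⟨v, rfl⟩ := hsurj x
    obtain ⟨w, rfl⟩ := hsurj y
    have hMk : ∀ u, M k (N.mkQ u) = N.mkQ (Bmat A (-1) k *ᵥ u) := fun u =>
      LinearMap.congr_fun (hM k) u
    rw [hMk, hMk, hg, hg, betaM_inv A b hbinv s hs]

end helpers

/-- **`MC_{−1}` turns symplectic tuples into orthogonal ones and orthogonal tuples into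
symplectic ones.** Let `A = (A_1, …, A_r)` be an irreducible tuple in `GL_n(ℂ)` (with at
least two members different from the identity if `n = 1`), and let `b` be a
nondegenerate bilinear form on `ℂⁿ` invariant under every `A_i`. If `b` is alternating,
then `V = (ℂⁿ)^r/(K + L)` carries a nondegenerate symmetric bilinear form invariant
under every member of `MC_{−1}(A)`; if `b` is symmetric, then `V` carries a
nondegenerate alternating such form. -/
theorem middle_convolution_neg_one_duality (n r : ℕ) (hn : 1 ≤ n) (hr : 1 ≤ r)
    (A : Fin r → Matrix (Fin n) (Fin n) ℂ)
    (hUnit : ∀ k, IsUnit (A k))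
    (hIrr : IrredEndos fun k => (A k).mulVecLin)
    (hn1 : n = 1 → ∃ i j : Fin r, i ≠ j ∧ A i ≠ 1 ∧ A j ≠ 1)
    (b : (Fin n → ℂ) →ₗ[ℂ] (Fin n → ℂ) →ₗ[ℂ] ℂ)
    (hbnd : ∀ v, (∀ w, b v w = 0) → v = 0)
    (hbinv : ∀ k, ∀ v w, b ((A k).mulVec v) ((A k).mulVec w) = b v w)
    (M : Fin r → MCspace A (-1) →ₗ[ℂ] MCspace A (-1))
    (hM : ∀ k, (M k).comp (Ksub A ⊔ Lsub A (-1)).mkQ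
        = ((Ksub A ⊔ Lsub A (-1)).mkQ).comp (Bmat A (-1) k).mulVecLin) :
    ((∀ v, b v v = 0) →
      ∃ b' : MCspace A (-1) →ₗ[ℂ] MCspace A (-1) →ₗ[ℂ] ℂ,
        (∀ x, (∀ y, b' x y = 0) → x = 0) ∧
        (∀ x y, b' x y = b' y x) ∧
        (∀ k, ∀ x y, b' (M k x) (M k y) = b' x y)) ∧
    ((∀ v w, b v w = b w v) →
      ∃ b' : MCspace A (-1) →ₗ[ℂ] MCspace A (-1) →ₗ[ℂ] ℂ,
        (∀ x, (∀ y, b' x y = 0) → x = 0) ∧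
        (∀ x, b' x x = 0) ∧
        (∀ k, ∀ x y, b' (M k x) (M k y) = b' x y)) := by
  constructor
  · intro halt
    have hs : ∀ v w, b v w = (-1) * b w v := by
      intro v w
      have := halt (v + w)
      simp only [map_add, LinearMap.add_apply, halt] at this
      linear_combination this
    obtain ⟨b', h1, h2, h3⟩ := mcM_main A hUnit b hbnd hbinv M hM (-1) hs
    exact ⟨b', h1, fun x y => by rw [h2 x y]; ring, h3⟩
  · intro hsymm
    obtain ⟨b', h1, h2, h3⟩ := mcM_main A hUnit b hbnd hbinv M hM 1
      (fun v w => by rw [hsymm v w, one_mul])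
    refine ⟨b', h1, fun x => ?_, h3⟩
    have := h2 x x
    linear_combination (1/2) * this


end
end

section
/- Rank formula for the middle convolution: Let n ≥ 1, r ≥ 1 and let A = (A_1, …, A_r) ∈ GL_n(ℂ)^r be an irreducible tuple such that, in case n = 1, at least two of the A_i differ from the identity. Then for every λ ∈ ℂ with λ ∉ {0, 1}, the rank of the middle convolution satisfies dim_ℂ V = ∑_{k=1}^{r} rank(A_k − I) + rank(λ·A_1 A_2 ⋯ A_r − I) − n, where V = (ℂⁿ)^r/(K+L). -/
open Matrix

noncomputable section

def mcS {n r : ℕ} (A : Fin r → Matrix (Fin n) (Fin n) ℂ) (lam : ℂ) (m : ℕ)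
    (v : (Fin r × Fin n) → ℂ) : Fin n → ℂ :=
  ∑ j : Fin r, (if (j : ℕ) < m then lam else 1) • ((A j - 1) *ᵥ blockProj j v)

lemma mcS_zero {n r : ℕ} (A : Fin r → Matrix (Fin n) (Fin n) ℂ) (lam : ℂ)
    (v : (Fin r × Fin n) → ℂ) :
    mcS A lam 0 v = ∑ j : Fin r, ((A j - 1) *ᵥ blockProj j v) := by
  simp [mcS]

lemma mcS_last {n r : ℕ} (A : Fin r → Matrix (Fin n) (Fin n) ℂ) (lam : ℂ)
    (v : (Fin r × Fin n) → ℂ) :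
    mcS A lam r v = lam • mcS A lam 0 v := by
  simp [mcS, Finset.smul_sum]

lemma mcS_succ {n r : ℕ} (A : Fin r → Matrix (Fin n) (Fin n) ℂ) (lam : ℂ)
    (v : (Fin r × Fin n) → ℂ) (k : Fin r) :
    mcS A lam (k + 1) v = mcS A lam k v + (lam - 1) • ((A k - 1) *ᵥ blockProj k v) := by
  have h : (lam - 1) • ((A k - 1) *ᵥ blockProj k v)
      = ∑ j : Fin r, if j = k then (lam - 1) • ((A j - 1) *ᵥ blockProj j v) else 0 := by
    simp
  rw [h, mcS, mcS, ← Finset.sum_add_distrib]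
  refine Finset.sum_congr rfl fun j _ => ?_
  rcases lt_trichotomy j k with h | h | h
  · have h1 : (j : ℕ) < k := h
    have h2 : (j : ℕ) < k + 1 := by omega
    simp [h1, h2, h.ne]
  · subst h
    simp only [lt_add_iff_pos_right, zero_lt_one, if_true, lt_irrefl, if_false]
    module
  · have h1 : ¬ (j : ℕ) < k := by have : (k : ℕ) < j := h; omega
    have h2 : ¬ (j : ℕ) < k + 1 := by have : (k : ℕ) < j := h; omega
    simp [h1, h2, h.ne']

lemma mc_B_apply {n r : ℕ} (A : Fin r → Matrix (Fin n) (Fin n) ℂ) (lam : ℂ)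
    (v : (Fin r × Fin n) → ℂ) (k : Fin r) (b : Fin n) :
    ((Bmat A lam k) *ᵥ v) (k, b)
      = (mcS A lam k v + (lam - 1) • (A k *ᵥ blockProj k v) + blockProj k v) b := by
  have h : ((lam - 1) • (A k *ᵥ blockProj k v) + blockProj k v)
      = ∑ j : Fin r, if j = k then
          ((lam - 1) • (A j *ᵥ blockProj j v) + blockProj j v) else 0 := by
    simp
  rw [add_assoc, h, mcS, ← Finset.sum_add_distrib, Finset.sum_apply, mulVec, dotProduct,
    Fintype.sum_prod_type]
  refine Finset.sum_congr rfl fun j _ => ?_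
  rcases lt_trichotomy j k with h | h | h
  · have h1 : (j : ℕ) < k := h
    simp [Bmat, h, h1, h.ne, mulVec, dotProduct, blockProj, Finset.mul_sum, mul_assoc]
  · subst h
    simp only [lt_irrefl, if_false, if_true, sub_mulVec, one_mulVec, one_smul, Bmat, of_apply]
    have : ((A j *ᵥ blockProj j v - blockProj j v)
        + ((lam - 1) • (A j *ᵥ blockProj j v) + blockProj j v))
        = lam • (A j *ᵥ blockProj j v) := by module
    rw [this]
    simp [mulVec, dotProduct, blockProj, Finset.mul_sum, mul_assoc]
  · have h1 : ¬ (j : ℕ) < k := by have : (k : ℕ) < j := h; omega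
    simp [Bmat, h.not_gt, h1, h.ne', mulVec, dotProduct, blockProj]

lemma mc_B_apply_ne {n r : ℕ} (A : Fin r → Matrix (Fin n) (Fin n) ℂ) (lam : ℂ)
    (v : (Fin r × Fin n) → ℂ) (k j : Fin r) (hj : j ≠ k) (b : Fin n) :
    ((Bmat A lam k) *ᵥ v) (j, b) = v (j, b) := by
  have : ((Bmat A lam k) *ᵥ v) (j, b)
      = ((1 : Matrix (Fin r × Fin n) (Fin r × Fin n) ℂ) *ᵥ v) (j, b) := by
    simp [mulVec, dotProduct, Bmat, hj]
  rw [this, one_mulVec]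

lemma mc_mem_L {n r : ℕ} (A : Fin r → Matrix (Fin n) (Fin n) ℂ) (lam : ℂ)
    (v : (Fin r × Fin n) → ℂ) :
    v ∈ Lsub A lam ↔ ∀ k : Fin r, mcS A lam k v = (1 - lam) • (A k *ᵥ blockProj k v) := by
  simp only [Lsub, Submodule.mem_iInf, LinearMap.mem_ker, LinearMap.sub_apply,
    LinearMap.id_apply, mulVecLin_apply, sub_eq_zero]
  refine forall_congr' fun k => ?_
  have e : mcS A lam k v = (1 - lam) • (A k *ᵥ blockProj k v) ↔
      mcS A lam k v + (lam - 1) • (A k *ᵥ blockProj k v) + blockProj k v = blockProj k v := by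
    rw [add_eq_right, ← neg_sub lam 1, neg_smul, eq_neg_iff_add_eq_zero]
  rw [e]
  constructor
  · intro h
    ext b
    rw [← mc_B_apply, h]
    rfl
  · intro h
    ext ⟨j, b⟩
    by_cases hj : j = k
    · subst hj
      rw [mc_B_apply, h]
      rfl
    · exact mc_B_apply_ne A lam v k j hj b

lemma mc_mem_K {n r : ℕ} (A : Fin r → Matrix (Fin n) (Fin n) ℂ)
    (v : (Fin r × Fin n) → ℂ) :
    v ∈ Ksub A ↔ ∀ k : Fin r, (A k - 1) *ᵥ blockProj k v = 0 := by
  simp only [Ksub, Submodule.mem_iInf, LinearMap.mem_ker, LinearMap.comp_apply, mulVecLin_apply]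

lemma mc_ext {n r : ℕ} {v w : (Fin r × Fin n) → ℂ}
    (h : ∀ k : Fin r, blockProj k v = blockProj k w) : v = w := by
  ext ⟨j, b⟩
  exact congrFun (h j) b

lemma mc_disjoint {n r : ℕ} (A : Fin r → Matrix (Fin n) (Fin n) ℂ) (lam : ℂ)
    (hl1 : lam ≠ 1) : Ksub A ⊓ Lsub A lam = ⊥ := by
  rw [eq_bot_iff]
  rintro v ⟨hK, hL⟩
  have hK := (mc_mem_K A v).1 hK
  have hL := (mc_mem_L A lam v).1 hL
  rw [Submodule.mem_bot]
  apply mc_ext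
  intro k
  have h1 := hL k
  have h2 := hK k
  rw [sub_mulVec, one_mulVec, sub_eq_zero] at h2
  rw [h2] at h1
  simp only [mcS, hK, smul_zero, Finset.sum_const_zero] at h1
  rw [map_zero]
  exact (smul_eq_zero.1 h1.symm).resolve_left (sub_ne_zero.2 hl1.symm)

/-- Product of the last matrices, from index `m` on. -/
def mcT {n r : ℕ} (A : Fin r → Matrix (Fin n) (Fin n) ℂ) (m : ℕ) :
    Matrix (Fin n) (Fin n) ℂ := ((List.ofFn A).drop m).prod

lemma mcT_last {n r : ℕ} (A : Fin r → Matrix (Fin n) (Fin n) ℂ) : mcT A r = 1 := by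
  rw [mcT, List.drop_of_length_le (by simp), List.prod_nil]

lemma mcT_step {n r : ℕ} (A : Fin r → Matrix (Fin n) (Fin n) ℂ) (k : Fin r) :
    mcT A k = A k * mcT A (k + 1) := by
  rw [mcT, mcT, List.drop_eq_getElem_cons (by simp), List.prod_cons]
  simp

lemma mc_step {n r : ℕ} (A : Fin r → Matrix (Fin n) (Fin n) ℂ) (lam : ℂ)
    (v : (Fin r × Fin n) → ℂ) (hv : v ∈ Lsub A lam) (k : Fin r) :
    mcS A lam (k + 1) v = (1 - lam) • blockProj k v := by
  rw [mcS_succ, (mc_mem_L A lam v).1 hv k, sub_mulVec, one_mulVec]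
  module

lemma mc_chain {n r : ℕ} (A : Fin r → Matrix (Fin n) (Fin n) ℂ) (lam : ℂ)
    (v : (Fin r × Fin n) → ℂ) (hv : v ∈ Lsub A lam) (m : ℕ) (hm : m ≤ r) :
    mcS A lam m v = mcT A m *ᵥ mcS A lam r v := by
  induction hm using Nat.decreasingInduction with
  | self => rw [mcT_last, one_mulVec]
  | of_succ k hk ih =>
    have h1 := mc_step A lam v hv ⟨k, hk⟩
    have h2 := (mc_mem_L A lam v).1 hv ⟨k, hk⟩
    have h3 := mcT_step A ⟨k, hk⟩
    simp only at h1 h2 h3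
    rw [h3, ← mulVec_mulVec, ← ih, h1, h2, mulVec_smul]

def mcG {n r : ℕ} (A : Fin r → Matrix (Fin n) (Fin n) ℂ) (lam : ℂ) :
    ((Fin r × Fin n) → ℂ) →ₗ[ℂ] (Fin n → ℂ) :=
  lam • ∑ j : Fin r, ((A j - 1).mulVecLin).comp (blockProj j)

lemma mcG_apply {n r : ℕ} (A : Fin r → Matrix (Fin n) (Fin n) ℂ) (lam : ℂ)
    (v : (Fin r × Fin n) → ℂ) : mcG A lam v = mcS A lam r v := by
  rw [mcS_last, mcS_zero]
  simp only [mcG, LinearMap.smul_apply, LinearMap.sum_apply, LinearMap.comp_apply, mulVecLin_apply]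

lemma mc_map {n r : ℕ} (A : Fin r → Matrix (Fin n) (Fin n) ℂ) (lam : ℂ) (hl1 : lam ≠ 1) :
    (Lsub A lam).map (mcG A lam) =
      LinearMap.ker (lam • (List.ofFn A).prod - 1).mulVecLin := by
  have hl : (1 - lam) ≠ 0 := sub_ne_zero.2 hl1.symm
  have hT0 : mcT A 0 = (List.ofFn A).prod := by simp [mcT]
  rw [← hT0]
  ext x
  simp only [Submodule.mem_map, LinearMap.mem_ker, mulVecLin_apply, sub_mulVec, one_mulVec,
    sub_eq_zero, smul_mulVec, mcG_apply]
  constructor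
  · rintro ⟨v, hv, rfl⟩
    rw [← mc_chain A lam v hv 0 (Nat.zero_le _), ← mcS_last]
  · intro hx
    let u : ℕ → Fin n → ℂ := fun m => mcT A m *ᵥ x
    let v : (Fin r × Fin n) → ℂ := fun p => (1 - lam)⁻¹ * u (p.1 + 1) p.2
    have hvk : ∀ k : Fin r, blockProj k v = (1 - lam)⁻¹ • u (k + 1) := fun k => rfl
    have hu : ∀ k : Fin r, A k *ᵥ u (k + 1) = u k := by
      intro k
      simp only [u]
      rw [mulVec_mulVec, ← mcT_step]
    have hur : u r = x := by simp only [u, mcT_last, one_mulVec]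
    have hd : ∀ k : Fin r, (A k - 1) *ᵥ blockProj k v = (1 - lam)⁻¹ • (u k - u (k + 1)) := by
      intro k
      rw [hvk, mulVec_smul, sub_mulVec, one_mulVec, hu]
    have hS : ∀ m : ℕ, m ≤ r → mcS A lam m v = u m := by
      intro m
      induction m with
      | zero =>
        intro _
        rw [mcS_zero, Finset.sum_congr rfl (fun j _ => hd j), ← Finset.smul_sum,
          Fin.sum_univ_eq_sum_range (fun j => u j - u (j + 1)) r, Finset.sum_range_sub', hur]
        have : u 0 - x = (1 - lam) • u 0 := by
          rw [sub_smul, one_smul]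
          congr 1
          exact hx.symm
        rw [this, smul_smul, inv_mul_cancel₀ hl, one_smul]
      | succ k ih =>
        intro hk
        have h1 := mcS_succ A lam v ⟨k, hk⟩
        have h2 := hd ⟨k, hk⟩
        simp only at h1 h2
        rw [h1, h2, ih (by omega), smul_smul, ← neg_sub 1 lam, neg_mul, mul_inv_cancel₀ hl]
        module
    refine ⟨v, ?_, by rw [hS r le_rfl, hur]⟩
    rw [mc_mem_L]
    intro k
    rw [hS k k.2.le, hvk, mulVec_smul, hu, smul_smul, mul_inv_cancel₀ hl, one_smul]

lemma mc_finrank_L {n r : ℕ} (A : Fin r → Matrix (Fin n) (Fin n) ℂ) (lam : ℂ)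
    (hl1 : lam ≠ 1) :
    Module.finrank ℂ (Lsub A lam) =
      Module.finrank ℂ (LinearMap.ker (lam • (List.ofFn A).prod - 1).mulVecLin) := by
  have hinj : Function.Injective ((mcG A lam).domRestrict (Lsub A lam)) := by
    rw [← LinearMap.ker_eq_bot, eq_bot_iff]
    rintro ⟨v, hv⟩ h
    have h0 : mcS A lam r v = 0 := by
      rw [← mcG_apply]
      exact h
    rw [Submodule.mem_bot, Subtype.ext_iff]
    apply mc_ext
    intro k
    have h1 := mc_step A lam v hv k
    rw [mc_chain A lam v hv _ k.2, h0, mulVec_zero] at h1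
    change blockProj k v = blockProj k 0
    rw [map_zero]
    exact (smul_eq_zero.1 h1.symm).resolve_left (sub_ne_zero.2 hl1.symm)
  rw [← mc_map A lam hl1, ← LinearMap.finrank_range_of_inj hinj, LinearMap.range_domRestrict]

lemma mc_finrank_ker {n : ℕ} (M : Matrix (Fin n) (Fin n) ℂ) :
    M.rank + Module.finrank ℂ (LinearMap.ker M.mulVecLin) = n := by
  have := LinearMap.finrank_range_add_finrank_ker M.mulVecLin
  simpa [Matrix.rank] using this

def mcKequiv {n r : ℕ} (A : Fin r → Matrix (Fin n) (Fin n) ℂ) :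
    Ksub A ≃ₗ[ℂ] ((k : Fin r) → LinearMap.ker (A k - 1).mulVecLin) where
  toFun v k := ⟨blockProj k v.1, by
    rw [LinearMap.mem_ker]
    exact (mc_mem_K A v.1).1 v.2 k⟩
  map_add' v w := by
    ext k b
    rfl
  map_smul' c w := by
    ext k b
    rfl
  invFun f := ⟨fun p => (f p.1).1 p.2, by
    rw [mc_mem_K]
    intro k
    exact LinearMap.mem_ker.1 (f k).2⟩
  left_inv v := rfl
  right_inv f := rfl


/-- **Rank formula for the middle convolution.** Let `A = (A_1, …, A_r)` be an
irreducible tuple in `GL_n(ℂ)` (with at least two members different from the identity if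
`n = 1`) and `λ ∉ {0, 1}`. Then
`dim V = ∑_k rank (A_k − I) + rank (λ·A_1⋯A_r − I) − n` for `V = (ℂⁿ)^r/(K + L)`. -/
theorem middle_convolution_rank (n r : ℕ) (hn : 1 ≤ n) (hr : 1 ≤ r)
    (A : Fin r → Matrix (Fin n) (Fin n) ℂ)
    (hUnit : ∀ k, IsUnit (A k))
    (hIrr : IrredEndos fun k => (A k).mulVecLin)
    (hn1 : n = 1 → ∃ i j : Fin r, i ≠ j ∧ A i ≠ 1 ∧ A j ≠ 1)
    (lam : ℂ) (hl0 : lam ≠ 0) (hl1 : lam ≠ 1) :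
    Module.finrank ℂ (MCspace A lam) + n
      = (∑ k : Fin r, (A k - 1).rank) + (lam • (List.ofFn A).prod - 1).rank := by
  have hq := Submodule.finrank_quotient_add_finrank (Ksub A ⊔ Lsub A lam)
  have hs := Submodule.finrank_sup_add_finrank_inf_eq (Ksub A) (Lsub A lam)
  rw [mc_disjoint A lam hl1, finrank_bot, add_zero, mc_finrank_L A lam hl1,
    (mcKequiv A).finrank_eq, Module.finrank_pi_fintype] at hs
  have hP := mc_finrank_ker (lam • (List.ofFn A).prod - 1)
  have hK : (∑ k : Fin r, (A k - 1).rank)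
      + ∑ k : Fin r, Module.finrank ℂ (LinearMap.ker (A k - 1).mulVecLin) = r * n := by
    rw [← Finset.sum_add_distrib, Finset.sum_congr rfl (fun k _ => mc_finrank_ker (A k - 1))]
    simp
  rw [Module.finrank_fintype_fun_eq_card, Fintype.card_prod, Fintype.card_fin,
    Fintype.card_fin] at hq
  change Module.finrank ℂ (((Fin r × Fin n) → ℂ) ⧸ (Ksub A ⊔ Lsub A lam)) + n = _
  omega


end
end
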